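/- arXiv:alg-geom/9610006 — 3 statements merged into one kernel-verified Lean document; each statement's English description precedes it below -/
import Mathlib

section
/- Let I be a homogeneous unmixed ideal of projective dimension 0 in k[x_0,...,x_n] over a field k. Then the Hilbert function h_I satisfies h_I(m) ≥ m+1 for all m with 0 ≤ m ≤ deg I − 2, and h_I(m) = deg I for all m ≥ deg I − 1. -/
open MvPolynomial

/-- Integer-valued binomial coefficient `C(a, b)`, zero when `a < 0` or `a < b`. -/
def ichoose (a : ℤ) (b : ℕ) : ℤ := if a < 0 then 0 else (a.toNat).choose b

/-- The Hilbert function of a (homogeneous) ideal `I ⊆ k[x₀, …, xₙ]`: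
`m ↦ dim_k (k[x₀, …, xₙ]/I)_m`. -/
noncomputable def hilbF (k : Type*) [Field k] {n : ℕ}
    (I : Ideal (MvPolynomial (Fin (n+1)) k)) (m : ℕ) : ℕ :=
  Module.finrank k ((homogeneousSubmodule (Fin (n+1)) k m).map
    (Ideal.Quotient.mkₐ k I).toLinearMap)

open scoped Classical in
/-- The Hilbert polynomial of `I` (the polynomial agreeing with the Hilbert
function for all large `m`; junk value `0` if none exists). -/
noncomputable def hilbP (k : Type*) [Field k] {n : ℕ}
    (I : Ideal (MvPolynomial (Fin (n+1)) k)) : Polynomial ℚ :=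
  if h : ∃ P : Polynomial ℚ, ∀ᶠ m : ℕ in Filter.atTop,
      (hilbF k I m : ℚ) = P.eval (m : ℚ) then h.choose else 0

/-- The (algebraic) degree of a homogeneous ideal `I` of projective dimension
`d ≥ 0`: `d! · (leading coefficient of its Hilbert polynomial)`. -/
noncomputable def idealDeg (k : Type*) [Field k] {n : ℕ}
    (I : Ideal (MvPolynomial (Fin (n+1)) k)) : ℕ :=
  ⌊((hilbP k I).natDegree.factorial : ℚ) * (hilbP k I).leadingCoeff⌋₊

/-- The projective dimension of a homogeneous ideal `I` (of dimension `≥ 0`):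
the degree of its Hilbert polynomial. -/
noncomputable def idealDim (k : Type*) [Field k] {n : ℕ}
    (I : Ideal (MvPolynomial (Fin (n+1)) k)) : ℕ :=
  (hilbP k I).natDegree

/-- A homogeneous ideal: one containing all homogeneous components of its elements. -/
def IsHomogeneousIdeal {k : Type*} [Field k] {n : ℕ}
    (I : Ideal (MvPolynomial (Fin (n+1)) k)) : Prop :=
  ∀ f ∈ I, ∀ m : ℕ, homogeneousComponent m f ∈ I

/-- `I` is unmixed of projective dimension `d`: every associated prime `P` of
`k[x₀,…,xₙ]/I` satisfies `dim k[x₀,…,xₙ]/P = d + 1` (affine Krull dimension). -/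
def IsUnmixed (k : Type*) [Field k] {n : ℕ}
    (I : Ideal (MvPolynomial (Fin (n+1)) k)) (d : ℕ) : Prop :=
  ∀ P ∈ associatedPrimes (MvPolynomial (Fin (n+1)) k)
      (MvPolynomial (Fin (n+1)) k ⧸ I),
    ringKrullDim (MvPolynomial (Fin (n+1)) k ⧸ P) = ((d + 1 : ℕ) : WithBot (WithTop ℕ))

/-!
Let `V` be the space of linear forms in `A = k[x₀, …, xₙ] / I`, so that `h_I(m) = dim_k V ^ m`.
No nonzero element of `A` is killed by `V`, because an associated prime containing all the variables
would have a quotient of Krull dimension `0`. By McCoy's theorem the generic linear form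
`f = v₀ + v₁ t + ⋯ + v_r t ^ r`, for generators `vᵢ` of `V`, is then a nonzerodivisor in `A[t]`.
Let `M` be the `k[t]`-span of `V` in `A[t]`, so that `M ^ m` has rank `h_I(m)`. As
`f M ^ m ⊆ M ^ (m + 1)`, the ranks do not decrease. If two consecutive ranks agree, then
`q M ^ (m + 1) ⊆ f M ^ m` for some `q ≠ 0` in `k[t]`, and multiplying by `M` shows that the next
rank agrees as well. Hence `h_I` grows strictly from `1` until it reaches its eventual value
`deg I`.
-/

open Filter Module
open scoped Pointwise nonZeroDivisors

section StabilizingSequence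

lemma eq_of_eq_succ_of_eventually_eq {α : Type*} {h : ℕ → α} {D : α}
    (hstable : ∀ m, h m = h (m + 1) → h (m + 1) = h (m + 2))
    (hev : ∀ᶠ m in atTop, h m = D) {m : ℕ} (hm : h m = h (m + 1)) : h m = D := by
  have eq_succ : ∀ j ≥ m, h j = h (j + 1) := fun j hj =>
    Nat.le_induction hm (fun j _ => hstable j) j hj
  have eq_start : ∀ j ≥ m, h j = h m := fun j hj =>
    Nat.le_induction rfl (fun j hj ih => (eq_succ j hj).symm.trans ih) j hj
  obtain ⟨j, hjD, hj⟩ := (hev.and (eventually_ge_atTop m)).exists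
  rw [← eq_start j hj, hjD]

lemma min_succ_le_of_eventually_eq {h : ℕ → ℕ} {D : ℕ} (hmono : Monotone h)
    (hstable : ∀ m, h m = h (m + 1) → h (m + 1) = h (m + 2)) (h_zero : 1 ≤ h 0)
    (hev : ∀ᶠ m in atTop, h m = D) (m : ℕ) : min (m + 1) D ≤ h m := by
  induction m with
  | zero => omega
  | succ m ih =>
    have hle : h m ≤ h (m + 1) := hmono m.le_succ
    rcases hle.eq_or_lt with heq | hlt
    · have := eq_of_eq_succ_of_eventually_eq hstable hev heq
      omega
    · omega

lemma le_of_monotone_of_eventually_eq {α : Type*} [Preorder α] {h : ℕ → α} {D : α}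
    (hmono : Monotone h) (hev : ∀ᶠ m in atTop, h m = D) (m : ℕ) : h m ≤ D := by
  obtain ⟨j, hjD, hj⟩ := (hev.and (eventually_ge_atTop m)).exists
  exact hjD ▸ hmono hj

end StabilizingSequence

section RankOfPowers

variable {R B : Type*} [CommRing R] [CommRing B] [Algebra R B] {M : Submodule R B} {f : B}

lemma finrank_smul_of_mem_nonZeroDivisors (hf : f ∈ B⁰) (N : Submodule R B) :
    finrank R ↥(f • N) = finrank R N :=
  (Submodule.equivMapOfInjective (DistribSMul.toLinearMap R B f)
    (fun _ _ => (mul_cancel_left_mem_nonZeroDivisors hf).1) N).finrank_eq.symm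

lemma smul_pow_le_pow_succ (hfM : f ∈ M) (m : ℕ) : f • M ^ m ≤ M ^ (m + 1) := by
  rw [pow_succ', ← Submodule.span_singleton_mul]
  exact mul_le_mul_left ((Submodule.span_singleton_le_iff_mem f M).2 hfM) _

lemma finrank_pow_le_finrank_pow_succ [Nontrivial R] (hM : M.FG) (hfM : f ∈ M) (hf : f ∈ B⁰)
    (m : ℕ) : finrank R ↥(M ^ m) ≤ finrank R ↥(M ^ (m + 1)) := by
  have : Module.Finite R ↥(M ^ (m + 1)) := Module.Finite.of_fg (hM.pow _)
  rw [← finrank_smul_of_mem_nonZeroDivisors hf]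
  exact Submodule.finrank_mono (smul_pow_le_pow_succ hfM m)

variable [IsDomain R]

lemma finrank_eq_finrank_iff_exists_smul_le {E : Type*} [AddCommGroup E] [Module R E]
    {L N : Submodule R E} (hLN : L ≤ N) [Module.Finite R N] :
    finrank R L = finrank R N ↔ ∃ q : R, q ≠ 0 ∧ q • N ≤ L := by
  have rank_add := Submodule.finrank_quotient_add_finrank (L.submoduleOf N)
  rw [(Submodule.submoduleOfEquivOfLe hLN).finrank_eq] at rank_add
  have quotient_rank : finrank R L = finrank R N ↔ finrank R (N ⧸ L.submoduleOf N) = 0 := by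
    omega
  rw [quotient_rank, finrank_eq_zero_iff_isTorsion]
  constructor
  · intro htors
    obtain ⟨q, hq, hq₀⟩ := Submodule.annihilator_top_inter_nonZeroDivisors htors
    refine ⟨q, nonZeroDivisors.ne_zero hq₀, ?_⟩
    rintro _ ⟨x, hx, rfl⟩
    have := Submodule.mem_annihilator.1 hq (Submodule.Quotient.mk ⟨x, hx⟩) trivial
    rwa [← Submodule.Quotient.mk_smul, Submodule.Quotient.mk_eq_zero] at this
  · rintro ⟨q, hq, hqN⟩ y
    obtain ⟨⟨x, hx⟩, rfl⟩ := Submodule.Quotient.mk_surjective _ y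
    refine ⟨⟨q, mem_nonZeroDivisors_of_ne_zero hq⟩, ?_⟩
    exact (Submodule.Quotient.mk_eq_zero _).2 (hqN (Submodule.smul_mem_pointwise_smul x q N hx))

lemma finrank_pow_eq_iff_exists_smul_pow_le (hM : M.FG) (hfM : f ∈ M) (hf : f ∈ B⁰) (m : ℕ) :
    finrank R ↥(M ^ m) = finrank R ↥(M ^ (m + 1)) ↔
      ∃ q : R, q ≠ 0 ∧ q • M ^ (m + 1) ≤ f • M ^ m := by
  have : Module.Finite R ↥(M ^ (m + 1)) := Module.Finite.of_fg (hM.pow _)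
  rw [← finrank_smul_of_mem_nonZeroDivisors hf (M ^ m),
    finrank_eq_finrank_iff_exists_smul_le (smul_pow_le_pow_succ hfM m)]

lemma finrank_pow_succ_eq_of_finrank_pow_eq (hM : M.FG) (hfM : f ∈ M) (hf : f ∈ B⁰) {m : ℕ}
    (hm : finrank R ↥(M ^ m) = finrank R ↥(M ^ (m + 1))) :
    finrank R ↥(M ^ (m + 1)) = finrank R ↥(M ^ (m + 2)) := by
  rw [finrank_pow_eq_iff_exists_smul_pow_le hM hfM hf] at hm ⊢
  obtain ⟨q, hq, hle⟩ := hm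
  refine ⟨q, hq, ?_⟩
  calc
    q • M ^ (m + 2) = q • M ^ (m + 1) * M := by rw [pow_succ M (m + 1), smul_mul_assoc]
    _ ≤ f • M ^ m * M := mul_le_mul_left hle M
    _ = f • M ^ (m + 1) := by rw [smul_mul_assoc, ← pow_succ]

end RankOfPowers

section PolynomialExtension

open scoped Polynomial

attribute [local instance] Polynomial.algebra

variable {k A : Type*} [CommRing k] [CommRing A] [Algebra k A]

lemma coeff_smul_C (p : k[X]) (a : A) (j : ℕ) :
    (p • (Polynomial.C a : A[X])).coeff j = p.coeff j • a := by
  rw [Algebra.smul_def, Polynomial.coeff_mul_C, Algebra.smul_def]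
  exact congrArg (· * a) (Polynomial.coeff_map _ _)

lemma C_smul_eq_C_smul_C (c : k) (a : A) :
    (Polynomial.C (c • a) : A[X]) = (Polynomial.C c : k[X]) • (Polynomial.C a : A[X]) := by
  ext j
  rw [coeff_smul_C, Polynomial.coeff_C, Polynomial.coeff_C]
  split_ifs <;> simp

/-- The extension of scalars of a `k`-submodule `W` of `A` along `k → k[X]`, realized as the
`k[X]`-submodule of `A[X]` generated by the constants in `W`. -/
noncomputable def polyExt (W : Submodule k A) : Submodule k[X] A[X] :=
  Submodule.span k[X] (Polynomial.C '' (W : Set A))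

lemma polyExt_span (s : Set A) :
    polyExt (Submodule.span k s) = Submodule.span k[X] (Polynomial.C '' s) := by
  refine le_antisymm (Submodule.span_le.2 ?_)
    (Submodule.span_mono (Set.image_mono Submodule.subset_span))
  rintro _ ⟨a, ha, rfl⟩
  induction ha using Submodule.span_induction with
  | mem x hx => exact Submodule.subset_span ⟨x, hx, rfl⟩
  | zero => simp
  | add x y _ _ hx hy => exact map_add (Polynomial.C (R := A)) x y ▸ add_mem hx hy
  | smul c x _ hx => exact C_smul_eq_C_smul_C c x ▸ Submodule.smul_mem _ _ hx

lemma polyExt_pow (W : Submodule k A) (m : ℕ) : polyExt (W ^ m) = polyExt W ^ m := by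
  rw [← Submodule.span_eq W, Submodule.span_pow, polyExt_span, polyExt_span, Submodule.span_pow,
    Set.image_pow]

lemma polyExt_fg {W : Submodule k A} (hW : W.FG) : (polyExt W).FG := by
  obtain ⟨s, rfl⟩ := hW
  rw [polyExt_span]
  exact Submodule.fg_span (s.finite_toSet.image _)

lemma linearIndependent_C_comp {ι : Type*} {v : ι → A} (hv : LinearIndependent k v) :
    LinearIndependent k[X] fun i => (Polynomial.C (v i) : A[X]) := by
  rw [linearIndependent_iff'] at hv ⊢
  intro s g hg i hi
  ext j
  refine hv s (fun i => (g i).coeff j) ?_ i hi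
  simpa [Polynomial.finsetSum_coeff, coeff_smul_C] using congrArg (Polynomial.coeff · j) hg

lemma finrank_polyExt [Nontrivial k] (W : Submodule k A) [Module.Free k W] [Module.Finite k W] :
    finrank k[X] (polyExt W) = finrank k W := by
  let b := finBasis k W
  have span_range : Submodule.span k (Set.range fun i => (b i : A)) = W := by
    rw [Set.range_comp' Subtype.val, ← W.coe_subtype, ← Submodule.map_span, b.span_eq,
      Submodule.map_subtype_top]
  have indep : LinearIndependent k fun i => (b i : A) :=
    b.linearIndependent.map' W.subtype W.ker_subtype
  have polyExt_eq :
      polyExt W = Submodule.span k[X] (Set.range fun i => Polynomial.C (b i : A)) := by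
    rw [Set.range_comp' Polynomial.C, ← polyExt_span, span_range]
  rw [polyExt_eq, finrank_span_eq_card (linearIndependent_C_comp indep), Fintype.card_fin]

lemma exists_mem_polyExt_mem_nonZeroDivisors {V : Submodule k A} (hV : V.FG)
    (hann : ∀ a : A, (∀ v ∈ V, a * v = 0) → a = 0) : ∃ f ∈ polyExt V, f ∈ A[X]⁰ := by
  obtain ⟨r, v, rfl⟩ := Submodule.fg_iff_exists_fin_generating_family.1 hV
  refine ⟨∑ i : Fin r, (Polynomial.X ^ (i : ℕ) : k[X]) • Polynomial.C (v i), ?_, ?_⟩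
  · rw [polyExt_span]
    exact sum_mem fun i _ => Submodule.smul_mem _ _ (Submodule.subset_span ⟨v i, ⟨i, rfl⟩, rfl⟩)
  · rw [Polynomial.mem_nonZeroDivisors_iff]
    intro a ha
    have mul_eq_zero (i : Fin r) : a * v i = 0 := by
      simpa [Polynomial.finsetSum_coeff, coeff_smul_C, Polynomial.coeff_X_pow, Fin.val_inj] using
        congrArg (Polynomial.coeff · (i : ℕ)) ha
    have span_le : Submodule.span k (Set.range v) ≤ LinearMap.ker (LinearMap.mulLeft k a) :=
      Submodule.span_le.2 (Set.range_subset_iff.2 mul_eq_zero)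
    exact hann a fun w hw => span_le hw

end PolynomialExtension

section PowersOfSubspace

variable {k A : Type*} [Field k] [CommRing A] [Algebra k A] {V : Submodule k A} {D : ℕ}

attribute [local instance] Polynomial.algebra

lemma finrank_polyExt_pow (hV : V.FG) (m : ℕ) :
    finrank (Polynomial k) ↥(polyExt V ^ m) = finrank k ↥(V ^ m) := by
  have : Module.Finite k ↥(V ^ m) := Module.Finite.of_fg (hV.pow m)
  rw [← polyExt_pow, finrank_polyExt]

lemma monotone_finrank_pow (hV : V.FG) (hann : ∀ a : A, (∀ v ∈ V, a * v = 0) → a = 0) :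
    Monotone fun m => finrank k ↥(V ^ m) := by
  obtain ⟨f, hfV, hf⟩ := exists_mem_polyExt_mem_nonZeroDivisors hV hann
  refine monotone_nat_of_le_succ fun m => ?_
  simpa only [finrank_polyExt_pow hV] using
    finrank_pow_le_finrank_pow_succ (polyExt_fg hV) hfV hf m

lemma finrank_pow_succ_eq_of_forall_mul_eq_zero (hV : V.FG)
    (hann : ∀ a : A, (∀ v ∈ V, a * v = 0) → a = 0) {m : ℕ}
    (hm : finrank k ↥(V ^ m) = finrank k ↥(V ^ (m + 1))) :
    finrank k ↥(V ^ (m + 1)) = finrank k ↥(V ^ (m + 2)) := by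
  obtain ⟨f, hfV, hf⟩ := exists_mem_polyExt_mem_nonZeroDivisors hV hann
  simp only [← finrank_polyExt_pow hV] at hm ⊢
  exact finrank_pow_succ_eq_of_finrank_pow_eq (polyExt_fg hV) hfV hf hm

lemma min_succ_le_finrank_pow (hV : V.FG) (hann : ∀ a : A, (∀ v ∈ V, a * v = 0) → a = 0)
    (hev : ∀ᶠ m in atTop, finrank k ↥(V ^ m) = D) (m : ℕ) :
    min (m + 1) D ≤ finrank k ↥(V ^ m) := by
  rcases subsingleton_or_nontrivial A with _ | _
  · obtain ⟨j, hj⟩ := hev.exists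
    rw [finrank_zero_of_subsingleton] at hj
    omega
  · refine min_succ_le_of_eventually_eq (monotone_finrank_pow hV hann)
      (fun m => finrank_pow_succ_eq_of_forall_mul_eq_zero hV hann) ?_ hev m
    rw [pow_zero, Submodule.one_eq_span, finrank_span_singleton one_ne_zero]

end PowersOfSubspace

section LinearForms

variable {σ k : Type*} [CommRing k]

/-- The image in `k[x_i : i ∈ σ] / I` of the space of linear forms. Its `m`-th power is the
image of the forms of degree `m`. -/
noncomputable def linearForms (I : Ideal (MvPolynomial σ k)) :
    Submodule k (MvPolynomial σ k ⧸ I) :=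
  (homogeneousSubmodule σ k 1).map (Ideal.Quotient.mkₐ k I).toLinearMap

variable (I : Ideal (MvPolynomial σ k))

lemma linearForms_fg [Finite σ] : (linearForms I).FG :=
  (homogeneousSubmodule_fg σ k 1).map _

lemma linearForms_pow (m : ℕ) : linearForms I ^ m =
    (homogeneousSubmodule σ k m).map (Ideal.Quotient.mkₐ k I).toLinearMap := by
  rw [linearForms, ← Submodule.map_pow, homogeneousSubmodule_one_pow]

variable {I}

lemma eq_zero_of_forall_mul_linearForms_eq_zero
    (hsat : ∀ f, (∀ i, X i * f ∈ I) → f ∈ I) (a : MvPolynomial σ k ⧸ I)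
    (ha : ∀ v ∈ linearForms I, a * v = 0) : a = 0 := by
  obtain ⟨f, rfl⟩ := Ideal.Quotient.mk_surjective a
  refine Ideal.Quotient.eq_zero_iff_mem.2 (hsat f fun i => ?_)
  rw [← Ideal.Quotient.eq_zero_iff_mem, map_mul, mul_comm]
  exact ha _ ⟨X i, isHomogeneous_X k i, rfl⟩

end LinearForms

section IrrelevantPrime

variable {σ k : Type*}

lemma algebraMap_quotient_surjective_of_X_mem [CommRing k]
    {P : Ideal (MvPolynomial σ k)} (hP : ∀ i, X i ∈ P) :
    Function.Surjective (algebraMap k (MvPolynomial σ k ⧸ P)) := by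
  have mk_eq : Ideal.Quotient.mkₐ k P = (Algebra.ofId k _).comp (aeval 0) :=
    algHom_ext fun i => by simpa using Ideal.Quotient.eq_zero_iff_mem.2 (hP i)
  intro y
  obtain ⟨p, rfl⟩ := Ideal.Quotient.mkₐ_surjective k P y
  exact ⟨aeval 0 p, (DFunLike.congr_fun mk_eq p).symm⟩

lemma ringKrullDim_quotient_le_zero_of_X_mem [Field k]
    {P : Ideal (MvPolynomial σ k)} (hP : ∀ i, X i ∈ P) :
    ringKrullDim (MvPolynomial σ k ⧸ P) ≤ 0 :=
  (ringKrullDim_le_of_surjective _ (algebraMap_quotient_surjective_of_X_mem hP)).trans_eq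
    (ringKrullDim_eq_zero_of_field k)

end IrrelevantPrime

section HilbertFunction

variable {k : Type*} [Field k] {n : ℕ} {I : Ideal (MvPolynomial (Fin (n + 1)) k)}

lemma IsUnmixed.mem_of_forall_X_mul_mem {d : ℕ} (hI : IsUnmixed k I d)
    {f : MvPolynomial (Fin (n + 1)) k} (hf : ∀ i, X i * f ∈ I) : f ∈ I := by
  by_contra hfI
  obtain ⟨P, hP, hle⟩ := exists_le_isAssociatedPrime_of_isNoetherianRing
    (MvPolynomial (Fin (n + 1)) k) (Ideal.Quotient.mk I f)
    (mt Ideal.Quotient.eq_zero_iff_mem.1 hfI)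
  have X_mem (i) : X i ∈ P := hle <| by
    rw [Submodule.mem_colon_singleton, Submodule.mem_bot]
    exact Ideal.Quotient.eq_zero_iff_mem.2 (hf i)
  have dim_le := ringKrullDim_quotient_le_zero_of_X_mem X_mem
  rw [hI P hP] at dim_le
  exact absurd (Nat.cast_le.1 dim_le) (Nat.not_succ_le_zero d)

lemma eventually_hilbF_eq_eval_hilbP (hne : hilbP k I ≠ 0) :
    ∀ᶠ m : ℕ in atTop, (hilbF k I m : ℚ) = (hilbP k I).eval (m : ℚ) := by
  unfold hilbP at hne ⊢
  split_ifs at hne ⊢ with hex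
  · exact hex.choose_spec
  · exact absurd rfl hne

lemma eventually_hilbF_eq_idealDeg (hne : hilbP k I ≠ 0) (hdim : idealDim k I = 0) :
    ∀ᶠ m in atTop, hilbF k I m = idealDeg k I := by
  obtain ⟨c, hc⟩ := Polynomial.natDegree_eq_zero.1 hdim
  filter_upwards [eventually_hilbF_eq_eval_hilbP hne] with m hm
  rw [← hc, Polynomial.eval_C] at hm
  rw [idealDeg, ← hc, Polynomial.natDegree_C, Polynomial.leadingCoeff_C, ← hm, Nat.factorial_zero,
    Nat.cast_one, one_mul, Nat.floor_natCast]

lemma hilbF_eq_finrank_linearForms_pow (I : Ideal (MvPolynomial (Fin (n + 1)) k)) (m : ℕ) :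
    hilbF k I m = finrank k ↥(linearForms I ^ m) := by
  rw [hilbF, linearForms_pow]

/-- `hsat` says that `I` is saturated with respect to the ideal of the variables. When `I` is not
homogeneous, `hilbF k I` is the Hilbert function of the largest homogeneous ideal inside `I`. -/
theorem hilbert_function_dim_zero_unmixed_general (I : Ideal (MvPolynomial (Fin (n + 1)) k))
    (hne : hilbP k I ≠ 0) (hdim : idealDim k I = 0)
    (hsat : ∀ f, (∀ i, X i * f ∈ I) → f ∈ I) :
    (∀ m : ℕ, m + 2 ≤ idealDeg k I → m + 1 ≤ hilbF k I m) ∧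
      (∀ m : ℕ, idealDeg k I - 1 ≤ m → hilbF k I m = idealDeg k I) := by
  have hfg := linearForms_fg I
  have hann := eq_zero_of_forall_mul_linearForms_eq_zero hsat
  have hev := eventually_hilbF_eq_idealDeg hne hdim
  simp only [hilbF_eq_finrank_linearForms_pow] at hev ⊢
  have lower := min_succ_le_finrank_pow hfg hann hev
  have upper := le_of_monotone_of_eventually_eq (monotone_finrank_pow hfg hann) hev
  refine ⟨fun m hm => ?_, fun m hm => ?_⟩
  · have := lower m
    omega
  · have := lower m
    have := upper m
    omega

end HilbertFunction

/-- lower bound and stabilization of the Hilbert function of a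
homogeneous unmixed ideal of projective dimension `0`. -/
theorem hilbert_function_dim_zero_unmixed {k : Type*} [Field k] {n : ℕ}
    (I : Ideal (MvPolynomial (Fin (n+1)) k))
    (hhom : IsHomogeneousIdeal I) (hne : hilbP k I ≠ 0)
    (hdim : idealDim k I = 0) (hunm : IsUnmixed k I 0) :
    (∀ m : ℕ, m + 2 ≤ idealDeg k I → m + 1 ≤ hilbF k I m) ∧
      (∀ m : ℕ, idealDeg k I - 1 ≤ m → hilbF k I m = idealDeg k I) :=
  hilbert_function_dim_zero_unmixed_general I hne hdim fun _ => hunm.mem_of_forall_X_mul_mem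
end

section
/- Let V ⊆ P^n be a variety and let φ : P^n → P^N be a regular map given by homogeneous polynomials f_0,...,f_N of degree D with no common zero. Then deg φ(V) ≤ deg V · D^{dim V}. -/
open MvPolynomial

/-- The vanishing ideal of a subset of the affine cone `k^{n+1}`. -/
noncomputable def vanIdeal (k : Type*) [Field k] {n : ℕ} (V : Set (Fin (n+1) → k)) :
    Ideal (MvPolynomial (Fin (n+1)) k) :=
  ⨅ x ∈ V, RingHom.ker (eval x)

/-!
Degree and dimension are read off the leading term of the Hilbert polynomial, so the bound follows
from a comparison of Hilbert functions. Let `I` be the ideal of `V` and `J` that of `φ(V)`, that is,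
the preimage of `I` under the substitution `Yⱼ ↦ Fⱼ`. Write `S_t` for the forms of degree `t` and
`W` for the linear span of the `Fⱼ`. The forms of degree `m` modulo `J` are `W ^ m` modulo `I`, and
`W ^ m ⊆ S_{Dm}`, whence `h_J(m) ≤ h_I(Dm)`. As the `Fⱼ` have no common zero, the Nullstellensatz
puts all forms of large degree into the ideal they generate; peeling off one factor from `W` at a
time yields `S_{e + Dm} = W ^ m · S_e` for some `e`, whence `h_I(e + Dm) ≤ h_J(m) · h_I(e)`. The two
inequalities show that both Hilbert polynomials have the same degree `d`, and the first one then
bounds the leading coefficient for `J` by `D ^ d` times the one for `I`.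

The Hilbert polynomial exists because `h_I` counts the standard monomials of `I`, whose exponents
form a lower set of `ℕ^(n+1)`; lower sets satisfy the descending chain condition by Dickson's lemma.
-/

open Filter
open scoped Polynomial Nat

/-- `EventuallyEqEval f P`: the numerical function `f` agrees with the polynomial `P` at all large
arguments. This is the relation between a Hilbert function and its Hilbert polynomial. -/
def EventuallyEqEval (f : ℕ → ℕ) (P : ℚ[X]) : Prop :=
  ∀ᶠ m : ℕ in atTop, (f m : ℚ) = P.eval (m : ℚ)

lemma leadingCoeff_nonneg_of_eventually_eval_nonneg {P : ℚ[X]}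
    (h : ∀ᶠ m : ℕ in atTop, 0 ≤ P.eval (m : ℚ)) : 0 ≤ P.leadingCoeff := by
  by_contra! hneg
  rcases lt_or_ge 0 P.degree with hdeg | hdeg
  · have hbot : Tendsto (fun m : ℕ ↦ P.eval (m : ℚ)) atTop atBot :=
      (P.tendsto_atBot_of_leadingCoeff_nonpos hdeg hneg.le).comp tendsto_natCast_atTop_atTop
    obtain ⟨m, hnonneg, hlt⟩ := (h.and (hbot.eventually_lt_atBot 0)).exists
    exact hnonneg.not_gt hlt
  · obtain ⟨m, hm⟩ := h.exists
    rw [Polynomial.eq_C_of_degree_le_zero hdeg] at hm hneg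
    simp only [Polynomial.eval_C, Polynomial.leadingCoeff_C] at hm hneg
    exact hm.not_gt hneg

lemma exists_eval_add_one_sub_eval_eq (P : ℚ[X]) :
    ∃ Q : ℚ[X], ∀ x : ℚ, Q.eval (x + 1) - Q.eval x = P.eval x := by
  induction P using Polynomial.induction_on' with
  | add P₁ P₂ h₁ h₂ =>
    obtain ⟨Q₁, hQ₁⟩ := h₁
    obtain ⟨Q₂, hQ₂⟩ := h₂
    refine ⟨Q₁ + Q₂, fun x ↦ ?_⟩
    simp only [Polynomial.eval_add, ← hQ₁ x, ← hQ₂ x]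
    ring
  | monomial d c =>
    refine ⟨Polynomial.C (c / (d + 1)) * Polynomial.bernoulli (d + 1), fun x ↦ ?_⟩
    simp only [add_comm x 1, Polynomial.eval_mul, Polynomial.bernoulli_eval_one_add,
      Polynomial.eval_C, Polynomial.eval_monomial, Nat.add_sub_cancel, Nat.cast_add_one]
    field_simp
    ring

namespace EventuallyEqEval

variable {f g : ℕ → ℕ} {P Q : ℚ[X]}

lemma leadingCoeff_nonneg (hf : EventuallyEqEval f P) : 0 ≤ P.leadingCoeff :=
  leadingCoeff_nonneg_of_eventually_eval_nonneg <| hf.mono fun m hm ↦ hm ▸ Nat.cast_nonneg (f m)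

lemma leadingCoeff_sub_nonneg (hf : EventuallyEqEval f P) (hg : EventuallyEqEval g Q)
    (hfg : f ≤ᶠ[atTop] g) : 0 ≤ (Q - P).leadingCoeff := by
  refine leadingCoeff_nonneg_of_eventually_eval_nonneg ?_
  filter_upwards [hf, hg, hfg] with m hfm hgm hle
  rw [Polynomial.eval_sub, ← hfm, ← hgm, sub_nonneg]
  exact_mod_cast hle

lemma natDegree_le (hf : EventuallyEqEval f P) (hg : EventuallyEqEval g Q)
    (hfg : f ≤ᶠ[atTop] g) : P.natDegree ≤ Q.natDegree := by
  by_contra! hlt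
  have hP : P ≠ 0 := by rintro rfl; simp at hlt
  have hsub := leadingCoeff_sub_nonneg hf hg hfg
  rw [Polynomial.leadingCoeff_sub_of_degree_lt' (Polynomial.degree_lt_degree hlt),
    Left.nonneg_neg_iff] at hsub
  exact hP (Polynomial.leadingCoeff_eq_zero.1 (hsub.antisymm hf.leadingCoeff_nonneg))

lemma leadingCoeff_le (hf : EventuallyEqEval f P) (hg : EventuallyEqEval g Q)
    (hfg : f ≤ᶠ[atTop] g) (hdeg : P.natDegree = Q.natDegree) :
    P.leadingCoeff ≤ Q.leadingCoeff := by
  by_contra! hlt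
  have hcoeff : (Q - P).coeff Q.natDegree = Q.leadingCoeff - P.leadingCoeff := by
    rw [Polynomial.coeff_sub, Polynomial.coeff_natDegree, ← hdeg, Polynomial.coeff_natDegree]
  have hnat : (Q - P).natDegree = Q.natDegree :=
    Polynomial.natDegree_eq_of_le_of_coeff_ne_zero
      ((Polynomial.natDegree_sub_le Q P).trans (max_le le_rfl hdeg.le))
      (hcoeff ▸ sub_ne_zero.2 hlt.ne)
  have hsub := leadingCoeff_sub_nonneg hf hg hfg
  rw [Polynomial.leadingCoeff, hnat, hcoeff, sub_nonneg] at hsub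
  exact hsub.not_gt hlt

-- `d! · P.leadingCoeff` is the `d`-th finite difference of `P`, hence of `f`.
lemma exists_natCast_eq_factorial_mul_leadingCoeff (hf : EventuallyEqEval f P) :
    ∃ z : ℕ, (z : ℚ) = P.natDegree ! * P.leadingCoeff := by
  obtain ⟨M, hM⟩ := eventually_atTop.1 hf
  have hint : ∃ z : ℤ, (z : ℚ) = P.natDegree ! * P.leadingCoeff := by
    refine ⟨∑ i ∈ Finset.range (P.natDegree + 1),
      ((-1 : ℤ) ^ (P.natDegree - i) * P.natDegree.choose i) * (f (M + i) : ℤ), ?_⟩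
    have hdiff := congrFun P.fwdDiff_iter_degree_eq_factorial (M : ℚ)
    rw [fwdDiff_iter_eq_sum_shift] at hdiff
    simp only [zsmul_eq_mul, nsmul_eq_mul, mul_one, Pi.smul_apply, Pi.natCast_apply,
      smul_eq_mul] at hdiff
    rw [mul_comm, ← hdiff]
    push_cast
    exact Finset.sum_congr rfl fun i _ ↦ by rw [hM _ (Nat.le_add_right M i), Nat.cast_add]
  obtain ⟨z, hz⟩ := hint
  have hz_nonneg : 0 ≤ z := by
    exact_mod_cast hz ▸ mul_nonneg (Nat.cast_nonneg _) hf.leadingCoeff_nonneg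
  lift z to ℕ using hz_nonneg
  exact ⟨z, by exact_mod_cast hz⟩

lemma mul_const (hf : EventuallyEqEval f P) (c : ℕ) :
    EventuallyEqEval (fun m ↦ f m * c) (P * Polynomial.C (c : ℚ)) := by
  filter_upwards [hf] with m hm
  rw [Nat.cast_mul, hm, Polynomial.eval_mul, Polynomial.eval_C]

lemma comp_linear (hf : EventuallyEqEval f P) {D : ℕ} (hD : 0 < D) (e : ℕ) :
    EventuallyEqEval (fun m ↦ f (e + D * m))
      (P.comp (Polynomial.C (D : ℚ) * Polynomial.X + Polynomial.C (e : ℚ))) := by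
  have htendsto : Tendsto (fun m : ℕ ↦ e + D * m) atTop atTop :=
    tendsto_atTop_mono (fun m ↦ Nat.le_add_left _ e) (tendsto_id.const_mul_atTop' hD)
  filter_upwards [htendsto.eventually hf] with m hm
  rw [hm, Polynomial.eval_comp]
  congr 1
  simp [add_comm]

lemma of_succ_eq_add (hf : EventuallyEqEval f P) (hg : EventuallyEqEval g Q) {h : ℕ → ℕ}
    (hh : ∀ m, h (m + 1) = f (m + 1) + g m) :
    EventuallyEqEval h (P + Q.comp (Polynomial.X - 1)) := by
  rw [EventuallyEqEval, ← map_add_atTop_eq_nat 1, eventually_map] at hf ⊢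
  filter_upwards [hf, hg] with m hfm hgm
  rw [hh, Nat.cast_add (f (m + 1)), hfm, hgm]
  simp

lemma exists_of_succ_eq_add (hg : EventuallyEqEval g Q)
    (h : ∀ m, f (m + 1) = g (m + 1) + f m) : ∃ P, EventuallyEqEval f P := by
  obtain ⟨S, hS⟩ := exists_eval_add_one_sub_eval_eq (Q.comp (Polynomial.X + 1))
  obtain ⟨M, hM⟩ := eventually_atTop.1 hg
  refine ⟨S + Polynomial.C ((f M : ℚ) - S.eval (M : ℚ)), eventually_atTop.2 ⟨M, fun m hm ↦ ?_⟩⟩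
  induction m, hm using Nat.le_induction with
  | base => simp
  | succ m hm ih =>
    have hSm := hS m
    have hgm := hM (m + 1) (by omega)
    rw [h m]
    push_cast at hgm ⊢
    simp only [Polynomial.eval_comp, Polynomial.eval_add, Polynomial.eval_X, Polynomial.eval_one,
      Polynomial.eval_C] at hSm ih ⊢
    linarith

end EventuallyEqEval

-- An infinite strictly descending chain of lower sets would yield points `a i ∈ U i \ U (i + 1)`,
-- and `a i ≤ a j` with `i < j` would put `a i` in `U (i + 1)`.
lemma wellFoundedLT_lowerSet {α : Type*} [Preorder α] [WellQuasiOrderedLE α] :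
    WellFoundedLT (LowerSet α) := by
  refine ⟨RelEmbedding.wellFounded_iff_isEmpty.2 ⟨fun U ↦ ?_⟩⟩
  have hanti : StrictAnti U := fun _ _ hij ↦ U.map_rel_iff.2 hij
  have hdrop (i : ℕ) : ∃ a ∈ U i, a ∉ U (i + 1) :=
    Set.not_subset.1 (hanti i.lt_succ_self).not_ge
  choose a ha ha' using hdrop
  obtain ⟨i, j, hij, hle⟩ := wellQuasiOrdered_le a
  exact ha' i ((U (i + 1)).lower hle (hanti.antitone hij (ha j)))

section DegreeCount

variable {σ : Type*}

/-- The number of exponents of total degree `m` in `U`. -/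
noncomputable def degreeCount (U : Set (σ →₀ ℕ)) (m : ℕ) : ℕ :=
  {a ∈ U | a.degree = m}.ncard

lemma degreeCount_succ [Finite σ] (U : Set (σ →₀ ℕ)) (i : σ) (m : ℕ) :
    degreeCount U (m + 1) =
      degreeCount {a ∈ U | a i = 0} (m + 1) +
        degreeCount ((· + Finsupp.single i 1) ⁻¹' U) m := by
  have hfinite : {a ∈ U | a.degree = m + 1}.Finite :=
    (Finsupp.finite_of_degree_eq (m + 1)).subset fun a ha ↦ ha.2
  rw [degreeCount, ← Set.ncard_inter_add_ncard_sdiff_eq_ncard _ {a | a i = 0} hfinite]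
  congr 1
  · exact congrArg Set.ncard (by ext a; simp only [Set.mem_inter_iff, Set.mem_ofPred_eq]; tauto)
  · refine .trans (congrArg Set.ncard ?_)
      (Set.ncard_image_of_injective _ (add_left_injective (Finsupp.single i 1)))
    ext a
    constructor
    · rintro ⟨⟨haU, hdeg⟩, hai⟩
      have hsub : a - Finsupp.single i 1 + Finsupp.single i 1 = a :=
        tsub_add_cancel_of_le (Finsupp.single_le_iff.2 (Nat.one_le_iff_ne_zero.2 hai))
      refine ⟨a - Finsupp.single i 1, ⟨by simpa only [Set.mem_preimage, hsub], ?_⟩, hsub⟩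
      rw [← hsub, map_add, Finsupp.degree_single] at hdeg
      exact Nat.succ_injective hdeg
    · rintro ⟨b, ⟨hbU, hdeg⟩, rfl⟩
      exact ⟨⟨hbU, by simp [hdeg]⟩, by simp⟩

lemma exists_eventuallyEqEval_degreeCount_of_support_subset [Finite σ] (s : Finset σ)
    (U : LowerSet (σ →₀ ℕ)) (hU : ∀ a ∈ U, a.support ⊆ s) :
    ∃ P, EventuallyEqEval (degreeCount (U : Set (σ →₀ ℕ))) P := by
  classical
  induction s using Finset.induction_on generalizing U with
  | empty =>
    refine ⟨0, eventually_atTop.2 ⟨1, fun m hm ↦ ?_⟩⟩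
    have hempty : {a ∈ (U : Set (σ →₀ ℕ)) | a.degree = m} = ∅ :=
      Set.eq_empty_of_forall_notMem fun a ⟨ha, hdeg⟩ ↦ by
        rw [Finsupp.support_eq_empty.1 (Finset.subset_empty.1 (hU a ha)), map_zero] at hdeg
        omega
    rw [degreeCount, hempty, Set.ncard_empty, Nat.cast_zero, Polynomial.eval_zero]
  | insert i s _ ih =>
    have := wellFoundedLT_lowerSet (α := σ →₀ ℕ)
    induction U using WellFoundedLT.induction with
    | ind U ihU =>
    obtain ⟨Q, hQ⟩ := ih ⟨{a ∈ U | a i = 0}, fun a b hba ha ↦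
        ⟨U.lower hba ha.1, Nat.le_zero.1 (ha.2 ▸ hba i)⟩⟩ fun a ha j hj ↦
      Finset.mem_of_mem_insert_of_ne (hU a ha.1 hj) fun hji ↦
        Finsupp.mem_support_iff.1 hj (hji ▸ ha.2)
    let shift : LowerSet (σ →₀ ℕ) :=
      ⟨(· + Finsupp.single i 1) ⁻¹' U, U.lower.preimage fun _ _ h ↦ add_le_add_left h _⟩
    have hshift : shift ≤ U := fun a ha ↦ U.lower le_self_add ha
    have hrec := degreeCount_succ (U : Set (σ →₀ ℕ)) i
    rcases hshift.eq_or_lt with heq | hlt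
    · have hset : (· + Finsupp.single i 1) ⁻¹' (U : Set (σ →₀ ℕ)) = U := congrArg SetLike.coe heq
      rw [hset] at hrec
      exact hQ.exists_of_succ_eq_add hrec
    · obtain ⟨R, hR⟩ := ihU shift hlt fun a ha ↦ hU a (hshift ha)
      exact ⟨_, hQ.of_succ_eq_add hR hrec⟩

theorem exists_eventuallyEqEval_degreeCount [Finite σ] (U : LowerSet (σ →₀ ℕ)) :
    ∃ P, EventuallyEqEval (degreeCount (U : Set (σ →₀ ℕ))) P := by
  have := Fintype.ofFinite σ
  exact exists_eventuallyEqEval_degreeCount_of_support_subset Finset.univ U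
    fun a _ ↦ Finset.subset_univ _

end DegreeCount

section RestrictSupport

variable {σ R : Type*} [CommRing R]

lemma restrictSupport_le_iff {s : Set (σ →₀ ℕ)} {W : Submodule R (MvPolynomial σ R)} :
    restrictSupport R s ≤ W ↔ ∀ a ∈ s, monomial a 1 ∈ W := by
  rw [restrictSupport_eq_span, Submodule.span_le, Set.image_subset_iff]
  rfl

lemma restrictSupport_inter (s t : Set (σ →₀ ℕ)) :
    restrictSupport R (s ∩ t) = restrictSupport R s ⊓ restrictSupport R t := by
  ext f
  simp only [Submodule.mem_inf, mem_restrictSupport_iff, Set.subset_inter_iff]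

lemma homogeneousSubmodule_eq_restrictSupport (m : ℕ) :
    homogeneousSubmodule σ R m = restrictSupport R {a | a.degree = m} :=
  homogeneousSubmodule_eq_finsupp_supported σ R m

lemma sub_leadingTerm_mem_restrictSupport (o : MonomialOrder σ) (g : MvPolynomial σ R) :
    g - o.leadingTerm g ∈ restrictSupport R {b | o.toSyn b < o.toSyn (o.degree g)} := by
  classical
  refine (mem_restrictSupport_iff R).2 fun b hb ↦ ?_
  have hle : o.toSyn b ≤ o.toSyn (o.degree g) :=
    (o.le_degree hb).trans (o.degree_sub_leadingTerm_le g)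
  refine hle.lt_of_ne fun heq ↦ ?_
  simp [o.toSyn.injective heq, MonomialOrder.leadingTerm, MonomialOrder.leadingCoeff] at hb

end RestrictSupport

section StandardExponents

variable {σ k : Type*} [Field k] (o : MonomialOrder σ)

/-- The exponents that are not leading exponents of elements of the linear subspace `W`. -/
def nonLeadingExponents (W : Submodule k (MvPolynomial σ k)) : Set (σ →₀ ℕ) :=
  {a | ∀ f ∈ W, f ≠ 0 → o.degree f ≠ a}

lemma disjoint_restrictSupport_nonLeadingExponents (W : Submodule k (MvPolynomial σ k)) :
    Disjoint W (restrictSupport k (nonLeadingExponents o W)) := by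
  refine Submodule.disjoint_def.2 fun f hfW hf ↦ ?_
  by_contra hf0
  exact (mem_restrictSupport_iff k).1 hf (o.degree_mem_support hf0) f hfW hf0 rfl

-- A leading monomial of `W` is congruent modulo `W` to a combination of smaller monomials.
lemma monomial_mem_sup_restrictSupport_nonLeadingExponents
    (W : Submodule k (MvPolynomial σ k)) (a : σ →₀ ℕ) :
    monomial a 1 ∈ W ⊔ restrictSupport k (nonLeadingExponents o W) := by
  induction hs : o.toSyn a using WellFoundedLT.induction generalizing a with
  | ind s ih =>
  subst hs
  by_cases ha : a ∈ nonLeadingExponents o W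
  · exact Submodule.mem_sup_right ((monomial_mem_restrictSupport k).2 (.inl ha))
  obtain ⟨g, hgW, hg0, rfl⟩ : ∃ g ∈ W, g ≠ 0 ∧ o.degree g = a := by
    simpa [nonLeadingExponents] using ha
  have htail : g - o.leadingTerm g ∈ W ⊔ restrictSupport k (nonLeadingExponents o W) :=
    restrictSupport_le_iff.2 (fun b hb ↦ ih _ hb b rfl) (sub_leadingTerm_mem_restrictSupport o g)
  have hlead : o.leadingTerm g ∈ W ⊔ restrictSupport k (nonLeadingExponents o W) := by
    simpa only [sub_sub_cancel] using Submodule.sub_mem _ (Submodule.mem_sup_left hgW) htail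
  rw [MonomialOrder.leadingTerm, ← mul_one (o.leadingCoeff g), ← smul_eq_mul,
    ← smul_monomial] at hlead
  exact (Submodule.smul_mem_iff _ (o.leadingCoeff_ne_zero_iff.2 hg0)).1 hlead

lemma isCompl_restrictSupport_nonLeadingExponents (W : Submodule k (MvPolynomial σ k)) :
    IsCompl W (restrictSupport k (nonLeadingExponents o W)) := by
  refine ⟨disjoint_restrictSupport_nonLeadingExponents o W, codisjoint_iff_le_sup.2 ?_⟩
  rw [← restrictSupport_univ]
  exact restrictSupport_le_iff.2 fun a _ ↦
    monomial_mem_sup_restrictSupport_nonLeadingExponents o W a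

/-- The standard exponents of `I` with respect to `o`: those which are not leading exponents of
elements of `I`. Only homogeneous elements of `I` are considered, so that `I` itself need not be
homogeneous. -/
def standardExponents (I : Ideal (MvPolynomial σ k)) : Set (σ →₀ ℕ) :=
  {a | a ∈ nonLeadingExponents o (homogeneousSubmodule σ k a.degree ⊓ I.restrictScalars k)}

lemma isLowerSet_standardExponents (I : Ideal (MvPolynomial σ k)) :
    IsLowerSet (standardExponents o I) := by
  classical
  rintro a b hba ha f ⟨hf, hfI⟩ hf0 rfl
  have hdegree : (a - o.degree f) + o.degree f = a := tsub_add_cancel_of_le hba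
  have hmonomial : monomial (a - o.degree f) (1 : k) ≠ 0 := by simp
  refine ha (monomial (a - o.degree f) 1 * f) ⟨?_, I.mul_mem_left _ hfI⟩
    (mul_ne_zero hmonomial hf0) ?_
  · have := (isHomogeneous_monomial (d := a - o.degree f) (1 : k) rfl).mul hf
    rwa [← map_add, hdegree] at this
  · rw [MonomialOrder.degree_mul hmonomial hf0, MonomialOrder.degree_monomial,
      if_neg one_ne_zero, hdegree]

lemma restrictSupport_standardExponents (I : Ideal (MvPolynomial σ k)) (m : ℕ) :
    restrictSupport k {a ∈ standardExponents o I | a.degree = m} =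
      restrictSupport k
        (nonLeadingExponents o (homogeneousSubmodule σ k m ⊓ I.restrictScalars k)) ⊓
        homogeneousSubmodule σ k m := by
  rw [homogeneousSubmodule_eq_restrictSupport, ← restrictSupport_inter,
    ← homogeneousSubmodule_eq_restrictSupport]
  congr 1
  ext a
  exact and_congr_left fun ha ↦ by rw [← ha]; rfl

lemma sup_restrictSupport_standardExponents (I : Ideal (MvPolynomial σ k)) (m : ℕ) :
    (homogeneousSubmodule σ k m ⊓ I.restrictScalars k) ⊔
        restrictSupport k {a ∈ standardExponents o I | a.degree = m} =
      homogeneousSubmodule σ k m := by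
  rw [restrictSupport_standardExponents, ← sup_inf_assoc_of_le _ inf_le_left,
    (isCompl_restrictSupport_nonLeadingExponents o _).sup_eq_top, top_inf_eq]

lemma disjoint_restrictSupport_standardExponents (I : Ideal (MvPolynomial σ k)) (m : ℕ) :
    Disjoint (restrictSupport k {a ∈ standardExponents o I | a.degree = m})
      (I.restrictScalars k) := by
  rw [restrictSupport_standardExponents, disjoint_assoc]
  exact (disjoint_restrictSupport_nonLeadingExponents o _).symm

lemma finrank_map_mk_homogeneousSubmodule (I : Ideal (MvPolynomial σ k)) (m : ℕ) :
    Module.finrank k ((homogeneousSubmodule σ k m).map (Ideal.Quotient.mkₐ k I).toLinearMap) =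
      degreeCount (standardExponents o I) m := by
  have hker : LinearMap.ker (Ideal.Quotient.mkₐ k I).toLinearMap = I.restrictScalars k := by
    ext f
    exact Ideal.Quotient.eq_zero_iff_mem
  have hinj := LinearMap.injective_domRestrict_iff.2
    ((disjoint_restrictSupport_standardExponents o I m).mono_right hker.le)
  rw [← sup_restrictSupport_standardExponents o, Submodule.map_sup,
    LinearMap.le_ker_iff_map.1 (inf_le_right.trans hker.ge), bot_sup_eq,
    ← LinearMap.range_domRestrict, LinearMap.finrank_range_of_inj hinj,
    Module.finrank_eq_nat_card_basis (basisRestrictSupport k _)]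
  rfl

end StandardExponents

section HilbertPolynomial

variable {k : Type*} [Field k] {n : ℕ}

theorem exists_eventuallyEqEval_hilbF (I : Ideal (MvPolynomial (Fin (n + 1)) k)) :
    ∃ P, EventuallyEqEval (hilbF k I) P := by
  have hcount : hilbF k I = degreeCount (standardExponents MonomialOrder.lex I) :=
    funext (finrank_map_mk_homogeneousSubmodule MonomialOrder.lex I)
  rw [hcount]
  exact exists_eventuallyEqEval_degreeCount ⟨_, isLowerSet_standardExponents MonomialOrder.lex I⟩

lemma eventuallyEqEval_hilbF_hilbP (I : Ideal (MvPolynomial (Fin (n + 1)) k)) :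
    EventuallyEqEval (hilbF k I) (hilbP k I) := by
  have hexists := exists_eventuallyEqEval_hilbF I
  unfold EventuallyEqEval at hexists ⊢
  rw [hilbP, dif_pos hexists]
  exact hexists.choose_spec

lemma cast_idealDeg (I : Ideal (MvPolynomial (Fin (n + 1)) k)) :
    (idealDeg k I : ℚ) = (idealDim k I)! * (hilbP k I).leadingCoeff := by
  obtain ⟨z, hz⟩ := (eventuallyEqEval_hilbF_hilbP I).exists_natCast_eq_factorial_mul_leadingCoeff
  rw [idealDeg, idealDim, ← hz, Nat.floor_natCast]

end HilbertPolynomial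

lemma finrank_map_eq_of_ker_eq {R M M₁ M₂ : Type*} [Ring R] [AddCommGroup M] [Module R M]
    [AddCommGroup M₁] [Module R M₁] [AddCommGroup M₂] [Module R M₂]
    {f : M →ₗ[R] M₁} {g : M →ₗ[R] M₂}
    (h : LinearMap.ker f = LinearMap.ker g) (W : Submodule R M) :
    Module.finrank R (W.map f) = Module.finrank R (W.map g) := by
  rw [← LinearMap.range_domRestrict, ← LinearMap.range_domRestrict]
  have hker : LinearMap.ker (f.domRestrict W) = LinearMap.ker (g.domRestrict W) := by
    rw [LinearMap.ker_domRestrict, LinearMap.ker_domRestrict, h]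
  exact ((f.domRestrict W).quotKerEquivRange.symm ≪≫ₗ Submodule.quotEquivOfEq _ _ hker ≪≫ₗ
    (g.domRestrict W).quotKerEquivRange).finrank_eq

lemma finrank_mul_le {k A : Type*} [Field k] [Ring A] [Algebra k A] (M N : Submodule k A)
    [Module.Finite k M] [Module.Finite k N] :
    Module.finrank k ↥(M * N) ≤ Module.finrank k M * Module.finrank k N := by
  rw [← Submodule.mulMap_range, ← Module.finrank_tensorProduct]
  exact LinearMap.finrank_range_le _

section RegularMap

variable {σ τ R : Type*} [CommRing R]

lemma map_aeval_homogeneousSubmodule (F : τ → MvPolynomial σ R) (m : ℕ) :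
    (homogeneousSubmodule τ R m).map (aeval F).toLinearMap =
      Submodule.span R (Set.range F) ^ m := by
  rw [← homogeneousSubmodule_one_pow, Submodule.map_pow, homogeneousSubmodule_one_eq_span_X,
    Submodule.map_span, ← Set.range_comp]
  congr 3
  exact funext (aeval_X F)

lemma homogeneousComponent_add_mul_of_isHomogeneous {t D : ℕ} (a : MvPolynomial σ R)
    {f : MvPolynomial σ R} (hf : f.IsHomogeneous D) :
    homogeneousComponent (t + D) (a * f) = homogeneousComponent t a * f := by
  let := gradedAlgebra (σ := σ) (R := R)
  rw [← decomposition.decompose'_apply, ← decomposition.decompose'_apply]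
  exact DirectSum.coe_decompose_mul_add_of_right_mem (homogeneousSubmodule σ R)
    ((mem_homogeneousSubmodule D f).2 hf)

variable {F : τ → MvPolynomial σ R} {D : ℕ}

lemma homogeneousSubmodule_add_le_span_mul (hF : ∀ j, (F j).IsHomogeneous D) {t : ℕ}
    (ht : ∀ s ∈ homogeneousSubmodule σ R (t + D), s ∈ Ideal.span (Set.range F)) :
    homogeneousSubmodule σ R (t + D) ≤
      Submodule.span R (Set.range F) * homogeneousSubmodule σ R t := by
  intro s hs
  obtain ⟨a, rfl⟩ := Finsupp.mem_ideal_span_range_iff_exists_finsupp.1 (ht s hs)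
  rw [← homogeneousComponent_eq_self hs, Finsupp.sum, map_sum]
  refine Submodule.sum_mem _ fun j _ ↦ ?_
  rw [homogeneousComponent_add_mul_of_isHomogeneous _ (hF j), mul_comm (Submodule.span _ _)]
  exact Submodule.mul_mem_mul (homogeneousComponent_mem _ _)
    (Submodule.subset_span (Set.mem_range_self j))

lemma mem_idealOfVars_pow_of_isHomogeneous {s : MvPolynomial σ R} {e t : ℕ} (he : e ≤ t)
    (hs : s.IsHomogeneous t) : s ∈ idealOfVars σ R ^ e := by
  rw [mem_pow_idealOfVars_iff]
  intro d hd
  rw [hs.degree_eq_sum_deg_support hd] at he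
  exact he

lemma homogeneousSubmodule_add_mul_le (hF : ∀ j, (F j).IsHomogeneous D) {e : ℕ}
    (he : idealOfVars σ R ^ e ≤ Ideal.span (Set.range F)) (m : ℕ) :
    homogeneousSubmodule σ R (e + D * m) ≤
      Submodule.span R (Set.range F) ^ m * homogeneousSubmodule σ R e := by
  induction m with
  | zero => simp
  | succ m ih =>
    rw [mul_add_one, ← add_assoc]
    calc homogeneousSubmodule σ R (e + D * m + D)
        ≤ Submodule.span R (Set.range F) * homogeneousSubmodule σ R (e + D * m) :=
          homogeneousSubmodule_add_le_span_mul hF fun s hs ↦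
            he (mem_idealOfVars_pow_of_isHomogeneous (by omega) hs)
      _ ≤ Submodule.span R (Set.range F) *
          (Submodule.span R (Set.range F) ^ m * homogeneousSubmodule σ R e) :=
          mul_le_mul_right ih _
      _ = Submodule.span R (Set.range F) ^ (m + 1) * homogeneousSubmodule σ R e := by
          rw [← mul_assoc, ← pow_succ']

lemma idealOfVars_le_radical_span {k : Type*} [Field k] [IsAlgClosed k] [Finite σ]
    {F : τ → MvPolynomial σ k} (hFz : ∀ x : σ → k, x ≠ 0 → ∃ j, eval x (F j) ≠ 0) :
    idealOfVars σ k ≤ (Ideal.span (Set.range F)).radical := by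
  rw [← vanishingIdeal_zeroLocus_eq_radical (K := k), idealOfVars, Ideal.span_le]
  rintro _ ⟨i, rfl⟩
  rw [SetLike.mem_coe, mem_vanishingIdeal_iff]
  intro x hx
  have hx0 : x = 0 := by
    by_contra hne
    obtain ⟨j, hj⟩ := hFz x hne
    exact hj (mem_zeroLocus_iff.1 hx _ (Ideal.subset_span ⟨j, rfl⟩))
  rw [hx0, aeval_X, Pi.zero_apply]

end RegularMap

section HilbertFunctionComap

variable {k : Type*} [Field k] {n N D : ℕ} {F : Fin (N + 1) → MvPolynomial (Fin (n + 1)) k}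

lemma vanIdeal_image_eval (F : Fin (N + 1) → MvPolynomial (Fin (n + 1)) k)
    (V : Set (Fin (n + 1) → k)) :
    vanIdeal k ((fun x j ↦ eval x (F j)) '' V) = (vanIdeal k V).comap (aeval F) := by
  ext p
  have heval (x) : eval x (aeval F p) = eval (fun j ↦ eval x (F j)) p := by
    simpa only [aeval_eq_eval] using comp_aeval_apply F (aeval (R := k) x) p
  simp only [vanIdeal, Ideal.mem_comap, Submodule.mem_iInf, RingHom.mem_ker, heval,
    Set.forall_mem_image]

lemma hilbF_comap_aeval (F : Fin (N + 1) → MvPolynomial (Fin (n + 1)) k)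
    (I : Ideal (MvPolynomial (Fin (n + 1)) k)) (m : ℕ) :
    hilbF k (I.comap (aeval F)) m = Module.finrank k
      ((Submodule.span k (Set.range F) ^ m).map (Ideal.Quotient.mkₐ k I).toLinearMap) := by
  rw [hilbF, ← map_aeval_homogeneousSubmodule, ← Submodule.map_comp]
  refine finrank_map_eq_of_ker_eq ?_ _
  ext p
  exact Ideal.Quotient.eq_zero_iff_mem.trans (Ideal.Quotient.eq_zero_iff_mem (I := I)).symm

lemma hilbF_comap_aeval_le (hF : ∀ j, (F j).IsHomogeneous D)
    (I : Ideal (MvPolynomial (Fin (n + 1)) k)) (m : ℕ) :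
    hilbF k (I.comap (aeval F)) m ≤ hilbF k I (D * m) := by
  have : Module.Finite k (homogeneousSubmodule (Fin (n + 1)) k (D * m)) :=
    Module.Finite.iff_fg.2 (homogeneousSubmodule_fg _ _ _)
  rw [hilbF_comap_aeval, ← map_aeval_homogeneousSubmodule]
  refine Submodule.finrank_mono (Submodule.map_mono ?_)
  rintro _ ⟨p, hp, rfl⟩
  exact IsHomogeneous.aeval hp F hF

lemma hilbF_add_mul_le (hF : ∀ j, (F j).IsHomogeneous D) {e : ℕ}
    (he : idealOfVars (Fin (n + 1)) k ^ e ≤ Ideal.span (Set.range F))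
    (I : Ideal (MvPolynomial (Fin (n + 1)) k)) (m : ℕ) :
    hilbF k I (e + D * m) ≤ hilbF k (I.comap (aeval F)) m * hilbF k I e := by
  let π := Ideal.Quotient.mkₐ k I
  let S := homogeneousSubmodule (Fin (n + 1)) k
  let W := Submodule.span k (Set.range F) ^ m
  have hW : W.FG := (Submodule.fg_span (Set.finite_range F)).pow m
  have hS : (S e).FG := homogeneousSubmodule_fg _ _ e
  have : Module.Finite k (W.map π.toLinearMap) := Module.Finite.iff_fg.2 (hW.map _)
  have : Module.Finite k ((S e).map π.toLinearMap) := Module.Finite.iff_fg.2 (hS.map _)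
  have : Module.Finite k ((W * S e).map π.toLinearMap) :=
    Module.Finite.iff_fg.2 ((hW.mul hS).map _)
  calc hilbF k I (e + D * m)
      ≤ Module.finrank k ((W * S e).map π.toLinearMap) :=
        Submodule.finrank_mono (Submodule.map_mono (homogeneousSubmodule_add_mul_le hF he m))
    _ ≤ Module.finrank k (W.map π.toLinearMap) * Module.finrank k ((S e).map π.toLinearMap) := by
        rw [Submodule.map_mul]
        exact finrank_mul_le _ _
    _ = hilbF k (I.comap (aeval F)) m * hilbF k I e := by rw [hilbF_comap_aeval, hilbF]

theorem idealDim_comap_aeval (hD : 0 < D) (hF : ∀ j, (F j).IsHomogeneous D)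
    (hrad : idealOfVars (Fin (n + 1)) k ≤ (Ideal.span (Set.range F)).radical)
    (I : Ideal (MvPolynomial (Fin (n + 1)) k)) :
    idealDim k (I.comap (aeval F)) = idealDim k I := by
  have hI := eventuallyEqEval_hilbF_hilbP I
  have hJ := eventuallyEqEval_hilbF_hilbP (I.comap (aeval (R := k) F))
  have hD0 : (D : ℚ) ≠ 0 := Nat.cast_ne_zero.2 hD.ne'
  refine le_antisymm ?_ ?_
  · have hle := hJ.natDegree_le (hI.comp_linear hD 0) <| .of_forall fun m ↦ by
      simpa only [zero_add] using hilbF_comap_aeval_le hF I m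
    rwa [Polynomial.natDegree_comp, Polynomial.natDegree_linear hD0, mul_one] at hle
  · obtain ⟨e, he⟩ := Ideal.exists_pow_le_of_le_radical_of_fg hrad (idealOfVars_fg _ _)
    have hle := (hI.comp_linear hD e).natDegree_le (hJ.mul_const (hilbF k I e))
      (.of_forall (hilbF_add_mul_le hF he I))
    rw [Polynomial.natDegree_comp, Polynomial.natDegree_linear hD0, mul_one] at hle
    exact hle.trans (Polynomial.natDegree_mul_C_le _ _)

lemma leadingCoeff_hilbP_comap_aeval_le (hD : 0 < D) (hF : ∀ j, (F j).IsHomogeneous D)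
    (hrad : idealOfVars (Fin (n + 1)) k ≤ (Ideal.span (Set.range F)).radical)
    (I : Ideal (MvPolynomial (Fin (n + 1)) k)) :
    (hilbP k (I.comap (aeval F))).leadingCoeff ≤
      (hilbP k I).leadingCoeff * D ^ idealDim k I := by
  have hI := (eventuallyEqEval_hilbF_hilbP I).comp_linear hD 0
  have hJ := eventuallyEqEval_hilbF_hilbP (I.comap (aeval (R := k) F))
  have hlinear := Polynomial.natDegree_linear (b := ((0 : ℕ) : ℚ)) (Nat.cast_ne_zero.2 hD.ne')
  have hle := hJ.leadingCoeff_le hI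
    (.of_forall fun m ↦ by simpa only [zero_add] using hilbF_comap_aeval_le hF I m)
    (by rw [Polynomial.natDegree_comp, hlinear, mul_one]; exact idealDim_comap_aeval hD hF hrad I)
  rwa [Polynomial.leadingCoeff_comp (hlinear ▸ one_ne_zero),
    Polynomial.leadingCoeff_linear (Nat.cast_ne_zero.2 hD.ne')] at hle

end HilbertFunctionComap

theorem degree_image_regular_map_general {k : Type*} [Field k] {n N D : ℕ} (hD : 1 ≤ D)
    (F : Fin (N + 1) → MvPolynomial (Fin (n + 1)) k) (hF : ∀ j, (F j).IsHomogeneous D)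
    (hrad : idealOfVars (Fin (n + 1)) k ≤ (Ideal.span (Set.range F)).radical)
    (I : Ideal (MvPolynomial (Fin (n + 1)) k)) :
    idealDeg k (I.comap (aeval F)) ≤ idealDeg k I * D ^ idealDim k I := by
  suffices h : (idealDeg k (I.comap (aeval F)) : ℚ) ≤ idealDeg k I * D ^ idealDim k I by
    exact_mod_cast h
  calc (idealDeg k (I.comap (aeval F)) : ℚ)
      = (idealDim k I)! * (hilbP k (I.comap (aeval F))).leadingCoeff := by
        rw [cast_idealDeg, idealDim_comap_aeval hD hF hrad]
    _ ≤ (idealDim k I)! * ((hilbP k I).leadingCoeff * D ^ idealDim k I) := by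
        gcongr
        exact leadingCoeff_hilbP_comap_aeval_le hD hF hrad I
    _ = idealDeg k I * D ^ idealDim k I := by rw [cast_idealDeg, mul_assoc]

/-- the degree of the image of a projective variety under a regular
map given by degree-`D` homogeneous polynomials with no common zero satisfies
`deg φ(V) ≤ deg V · D^{dim V}`.  (Varieties are represented by their affine
cones in `k^{n+1}`, and degree and dimension via the vanishing ideal.) -/
theorem degree_image_regular_map {k : Type*} [Field k] [IsAlgClosed k] {n N D : ℕ}
    (hD : 1 ≤ D)
    (F : Fin (N+1) → MvPolynomial (Fin (n+1)) k)
    (hFh : ∀ j, (F j).IsHomogeneous D)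
    (hFz : ∀ x : Fin (n+1) → k, x ≠ 0 → ∃ j, eval x (F j) ≠ 0)
    (V : Set (Fin (n+1) → k))
    (hV : ∃ S : Set (MvPolynomial (Fin (n+1)) k),
      (∀ f ∈ S, ∃ m, f.IsHomogeneous m) ∧ V = {x | ∀ f ∈ S, eval x f = 0}) :
    idealDeg k (vanIdeal k ((fun x (j : Fin (N+1)) => eval x (F j)) '' V)) ≤
      idealDeg k (vanIdeal k V) * D ^ idealDim k (vanIdeal k V) := by
  rw [vanIdeal_image_eval]
  exact degree_image_regular_map_general hD F hFh (idealOfVars_le_radical_span hFz) _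
end

section
/- Let V ⊆ P^n be an irreducible projective variety of dimension d ≥ 0 over an algebraically closed field. Then for all m ≥ 1, the Hilbert function of V satisfies h_V(m) ≤ deg V · m^d + d. -/
open MvPolynomial

/-!
Let `R` be the homogeneous coordinate ring of `V`. A monomial order on polynomials in a
transcendence basis of `Frac R` extends to a valuation of `Frac R`; since `k` is algebraically
closed its residue field is `k`, so the dimension of a subspace is the number of values it takes,
and products of subspaces take at least the sums of values. The values of `R_m` affinely span a
space of some dimension `D ≥ d`, hence Freiman's lower bound for iterated sumsets gives
`(h_V(m) - D) * C(D + j, D) ≤ h_V(m (j + 1))` for all `j`. Letting `j → ∞` and comparing with the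
Hilbert polynomial yields `D = d`, and then `h_V(m) - d ≤ deg V * m ^ d` from leading coefficients.
-/

open scoped Pointwise

section Sumset

open Submodule

variable {F V : Type*} [Field F] [AddCommGroup V] [Module F V]

theorem finrank_span_insert_of_notMem {S : Finset V} {p : V} (hp : p ∉ span F (S : Set V)) :
    Module.finrank F (span F (insert p (S : Set V))) =
      Module.finrank F (span F (S : Set V)) + 1 := by
  have hp0 : p ≠ 0 := fun h => hp (h ▸ zero_mem _)
  have := Module.Finite.span_of_finite F S.finite_toSet
  have hinf : span F {p} ⊓ span F (S : Set V) = ⊥ :=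
    ((disjoint_span_singleton' hp0).2 hp).symm.eq_bot
  rw [span_insert, add_comm, ← finrank_span_singleton (K := F) hp0,
    ← finrank_sup_add_finrank_inf_eq, hinf, finrank_bot, add_zero]

variable [DecidableEq V]

theorem map_eq_zero_of_mem_nsmul {S : Finset V} {l : V →ₗ[F] F} (hl : ∀ s ∈ S, l s = 0) {j : ℕ}
    {x : V} (hx : x ∈ j • S) : l x = 0 := by
  rw [← Finset.mem_coe, Finset.coe_nsmul] at hx
  exact AddSubmonoid.nsmul_subset (S := (LinearMap.ker l).toAddSubmonoid) hl hx

variable [CharZero F]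

theorem choose_le_card_nsmul_of_linearIndepOn {b : Finset V} {d : ℕ}
    (hb : LinearIndepOn F id (b : Set V)) (hcard : b.card = d + 1) (j : ℕ) :
    (d + j).choose d ≤ (j • b).card := by
  have hchoose : (b.finsuppAntidiag j).card = (d + j).choose d := by
    rw [Finset.card_finsuppAntidiag_nat_eq_choose, hcard, Nat.add_right_comm, Nat.add_sub_cancel,
      Nat.choose_symm_add]
  rw [← hchoose]
  refine Finset.card_le_card_of_injOn (fun f => ∑ s ∈ b, f s • s) (fun f hf => ?_)
    fun f hf g hg hfg => ?_
  · obtain ⟨hsum, -⟩ := Finset.mem_finsuppAntidiag.1 hf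
    have := Set.finsetSum_mem_finsetSum b (fun s => f s • (b : Set V)) (fun s => f s • s)
      fun s hs => Set.nsmul_mem_nsmul hs
    rw [Finset.sum_nsmul_assoc, hsum] at this
    simpa using this
  · obtain ⟨-, hfsupp⟩ := Finset.mem_finsuppAntidiag.1 hf
    obtain ⟨-, hgsupp⟩ := Finset.mem_finsuppAntidiag.1 hg
    have hzero := linearIndepOn_finset_iff.1 hb (fun s => (f s : F) - g s) <| by
      simpa only [id, sub_smul, Finset.sum_sub_distrib, Nat.cast_smul_eq_nsmul]
        using sub_eq_zero.2 hfg
    ext s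
    by_cases hs : s ∈ b
    · exact_mod_cast sub_eq_zero.1 (hzero s hs)
    · rw [Finsupp.notMem_support_iff.1 (mt (@hfsupp s) hs),
        Finsupp.notMem_support_iff.1 (mt (@hgsupp s) hs)]

theorem sum_card_nsmul_le_card_nsmul_insert {S : Finset V} {p : V}
    (hp : p ∉ span F (S : Set V)) (j : ℕ) :
    ∑ i ∈ Finset.range (j + 1), (i • S).card ≤ (j • insert p S).card := by
  obtain ⟨μ, hμp, hμS⟩ := exists_le_ker_of_notMem hp
  have hμ : ∀ i, ∀ x ∈ (j - i) • p +ᵥ i • S, μ x = (j - i : ℕ) * μ p := by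
    intro i x hx
    obtain ⟨y, hy, rfl⟩ := Finset.mem_vadd_finset.1 hx
    rw [vadd_eq_add, map_add, map_nsmul, nsmul_eq_mul,
      map_eq_zero_of_mem_nsmul (fun s hs => hμS (subset_span hs)) hy, add_zero]
  have hdisj : (Finset.range (j + 1) : Set ℕ).PairwiseDisjoint fun i => (j - i) • p +ᵥ i • S := by
    refine fun i hi i' hi' hne => Finset.disjoint_left.2 fun x hx hx' => hne ?_
    have heq : ((j - i : ℕ) : F) = (j - i' : ℕ) :=
      mul_right_cancel₀ hμp ((hμ i x hx).symm.trans (hμ i' x hx'))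
    have := Nat.cast_injective heq
    simp only [Finset.coe_range, Set.mem_Iio] at hi hi'
    omega
  calc ∑ i ∈ Finset.range (j + 1), (i • S).card
      = ((Finset.range (j + 1)).biUnion fun i => (j - i) • p +ᵥ i • S).card := by
        simp only [Finset.card_biUnion hdisj, Finset.card_vadd_finset]
    _ ≤ (j • insert p S).card := Finset.card_le_card <| Finset.biUnion_subset.2 fun i hi x hx => by
        obtain ⟨y, hy, rfl⟩ := Finset.mem_vadd_finset.1 hx
        rw [← Nat.sub_add_cancel (Nat.lt_succ_iff.1 (Finset.mem_range.1 hi)), add_nsmul,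
          Nat.add_sub_cancel]
        exact Finset.add_mem_add (Finset.nsmul_mem_nsmul (Finset.mem_insert_self _ _))
          (Finset.nsmul_subset_nsmul_left (Finset.subset_insert _ _) hy)

theorem mul_choose_succ_le_card_succ_nsmul_insert {S : Finset V} {p : V}
    (hp : p ∉ span F (S : Set V)) {c d : ℕ} (hS : ∀ i, c * (d + i).choose d ≤ ((i + 1) • S).card)
    (j : ℕ) : c * (d + 1 + j).choose (d + 1) ≤ ((j + 1) • insert p S).card :=
  calc c * (d + 1 + j).choose (d + 1)
      = ∑ i ∈ Finset.range (j + 1), c * (d + i).choose d := by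
        rw [add_right_comm, add_comm d j, ← Nat.sum_range_add_choose, Finset.mul_sum]
        simp only [add_comm]
    _ ≤ ∑ i ∈ Finset.range (j + 1), ((i + 1) • S).card := Finset.sum_le_sum fun i _ => hS i
    _ ≤ ∑ i ∈ Finset.range (j + 2), (i • S).card := by
        rw [Finset.sum_range_succ' _ (j + 1)]
        exact Nat.le_add_right _ _
    _ ≤ ((j + 1) • insert p S).card := sum_card_nsmul_le_card_nsmul_insert hp (j + 1)

end Sumset

section Freiman

open Submodule

variable {F V : Type*} [Field F] [LinearOrder F] [IsStrictOrderedRing F]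
  [AddCommGroup V] [Module F V]

-- Tilt the hyperplane `l = 0` about its points in `S`, in a direction `μ` that does not move `p`,
-- until it first touches another point of `S`.
theorem exists_nonpos_map_eq_zero_ssubset {S : Finset V} {p q : V} {l : V →ₗ[F] F}
    (hl : ∀ s ∈ S, l s ≤ 0) (hp : 0 < l p) (hq : q ∈ S)
    (hqspan : q ∉ span F (insert p {s | s ∈ S ∧ l s = 0})) :
    ∃ l' : V →ₗ[F] F, (∀ s ∈ S, l' s ≤ 0) ∧ 0 < l' p ∧
      S.filter (l · = 0) ⊂ S.filter (l' · = 0) := by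
  obtain ⟨μ, hμq, hμker⟩ : ∃ μ : V →ₗ[F] F, 0 < μ q ∧
      span F (insert p {s | s ∈ S ∧ l s = 0}) ≤ LinearMap.ker μ := by
    obtain ⟨μ, hμq, hμker⟩ := exists_le_ker_of_notMem hqspan
    obtain hneg | hpos := lt_or_gt_of_ne hμq
    · exact ⟨-μ, by simpa using hneg, fun x hx => by simpa using hμker hx⟩
    · exact ⟨μ, hpos, hμker⟩
  have hμp : μ p = 0 := hμker (subset_span (Set.mem_insert _ _))
  have hμzero : ∀ s ∈ S, l s = 0 → μ s = 0 := fun s hs hls =>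
    hμker (subset_span (Set.mem_insert_of_mem _ ⟨hs, hls⟩))
  obtain ⟨r, hr, hrmin⟩ := (S.filter (0 < μ ·)).exists_min_image (fun s => -l s / μ s)
    ⟨q, Finset.mem_filter.2 ⟨hq, hμq⟩⟩
  obtain ⟨hrS, hμr⟩ := Finset.mem_filter.1 hr
  have hc : 0 ≤ -l r / μ r := div_nonneg (neg_nonneg.2 (hl r hrS)) hμr.le
  refine ⟨l + (-l r / μ r) • μ, fun s hs => ?_, by simpa [hμp] using hp, ?_⟩
  · change l s + -l r / μ r * μ s ≤ 0
    obtain hμs | hμs := lt_or_ge 0 (μ s)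
    · have := (le_div_iff₀ hμs).1 (hrmin s (Finset.mem_filter.2 ⟨hs, hμs⟩))
      linarith
    · linarith [hl s hs, mul_nonpos_of_nonneg_of_nonpos hc hμs]
  · refine Finset.ssubset_iff_of_subset (fun s hs => ?_) |>.2 ⟨r, ?_, fun hlr => ?_⟩
    · obtain ⟨hsS, hls⟩ := Finset.mem_filter.1 hs
      exact Finset.mem_filter.2 ⟨hsS, by simp [hls, hμzero s hsS hls]⟩
    · exact Finset.mem_filter.2 ⟨hrS, by simp [hμr.ne']⟩
    · exact hμr.ne' (hμzero r hrS (Finset.mem_filter.1 hlr).2)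

theorem exists_nonpos_subset_span_insert_map_eq_zero {S : Finset V} {p : V} {l : V →ₗ[F] F}
    (hl : ∀ s ∈ S, l s ≤ 0) (hp : 0 < l p) :
    ∃ l' : V →ₗ[F] F, (∀ s ∈ S, l' s ≤ 0) ∧ 0 < l' p ∧
      (S : Set V) ⊆ span F (insert p {s | s ∈ S ∧ l' s = 0}) := by
  classical
  have hne : (S.powerset.filter fun Z => ∃ l : V →ₗ[F] F,
      (∀ s ∈ S, l s ≤ 0) ∧ 0 < l p ∧ S.filter (l · = 0) = Z).Nonempty :=
    ⟨_, Finset.mem_filter.2 ⟨Finset.mem_powerset.2 (Finset.filter_subset _ _), l, hl, hp, rfl⟩⟩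
  obtain ⟨Z, hZ⟩ := Finset.exists_maximal hne
  obtain ⟨-, l', hl', hp', rfl⟩ := Finset.mem_filter.1 hZ.prop
  refine ⟨l', hl', hp', fun q hq => by_contra fun hqspan => ?_⟩
  obtain ⟨l'', hl'', hp'', hlt⟩ := exists_nonpos_map_eq_zero_ssubset hl' hp' hq hqspan
  exact hZ.not_gt (Finset.mem_filter.2 ⟨Finset.mem_powerset.2 (Finset.filter_subset _ _),
    l'', hl'', hp'', rfl⟩) hlt

theorem exists_linearMap_injOn (S : Finset V) : ∃ φ : V →ₗ[F] F, Set.InjOn φ S := by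
  obtain ⟨φ, hφ⟩ := Module.exists_dual_forall_apply_ne_zero (K := F)
    (fun x : {x : S × S // x.1 ≠ x.2} => (x.1.1 - x.1.2 : V))
    fun x hx => x.2 (Subtype.ext (sub_eq_zero.1 hx))
  refine ⟨φ, fun s hs t ht hst => by_contra fun hne => ?_⟩
  have := hφ ⟨(⟨s, hs⟩, ⟨t, ht⟩), fun h => hne (congrArg Subtype.val h)⟩
  rw [map_sub] at this
  exact this (sub_eq_zero.2 hst)

variable [DecidableEq V]

theorem map_nonneg_of_mem_nsmul {S : Finset V} {l : V →ₗ[F] F} (hl : ∀ s ∈ S, 0 ≤ l s) {j : ℕ}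
    {x : V} (hx : x ∈ j • S) : 0 ≤ l x := by
  rw [← Finset.mem_coe, Finset.coe_nsmul] at hx
  exact AddSubmonoid.nsmul_subset (S := (AddSubmonoid.nonneg F).comap l.toAddMonoidHom) hl hx

-- A facet of `S` visible from `p` gives, together with `p`, sums strictly beyond that facet.
theorem card_nsmul_add_choose_le_card_nsmul_insert {S : Finset V} {p : V} {l : V →ₗ[F] F} {d : ℕ}
    (hl : ∀ s ∈ S, l s ≤ 0) (hp : 0 < l p)
    (hrank : Module.finrank F (span F (insert p S : Set V)) = d + 1) (j : ℕ) :
    ((j + 1) • S).card + (d + j).choose d ≤ ((j + 1) • insert p S).card := by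
  obtain ⟨l, hl, hp, hspan⟩ := exists_nonpos_subset_span_insert_map_eq_zero hl hp
  have hfacet : insert p {s | s ∈ S ∧ l s = 0} ⊆ (insert p S : Set V) :=
    Set.insert_subset_insert fun s hs => hs.1
  obtain ⟨b, hb, hbspan, hbind⟩ := exists_linearIndependent F (insert p {s | s ∈ S ∧ l s = 0})
  lift b to Finset V using (S.finite_toSet.insert p).subset (hb.trans hfacet)
  have hbcard : b.card = d + 1 := by
    have hspan_eq : span F (insert p {s | s ∈ S ∧ l s = 0}) = span F (insert p (S : Set V)) :=
      (span_mono hfacet).antisymm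
        (span_le.2 (Set.insert_subset (subset_span (Set.mem_insert _ _)) hspan))
    rw [← hrank, ← hspan_eq, ← hbspan, finrank_span_finset_eq_card hbind]
  have hbl : ∀ s ∈ b, 0 ≤ l s := fun s hs => by
    obtain rfl | hs := hb hs
    exacts [hp.le, hs.2.ge]
  have hdisj : Disjoint ((j + 1) • S) (p +ᵥ j • b) := by
    refine Finset.disjoint_left.2 fun x hx hx' => ?_
    obtain ⟨y, hy, rfl⟩ := Finset.mem_vadd_finset.1 hx'
    have hx_nonpos : 0 ≤ (-l) (p +ᵥ y) :=
      map_nonneg_of_mem_nsmul (fun s hs => neg_nonneg.2 (hl s hs)) hx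
    have hy_nonneg := map_nonneg_of_mem_nsmul hbl hy
    rw [LinearMap.neg_apply, vadd_eq_add, map_add] at hx_nonpos
    linarith
  calc ((j + 1) • S).card + (d + j).choose d
      ≤ ((j + 1) • S).card + (j • b).card := by
        gcongr
        exact choose_le_card_nsmul_of_linearIndepOn hbind hbcard j
    _ = ((j + 1) • S ∪ (p +ᵥ j • b)).card := by
        rw [Finset.card_union_of_disjoint hdisj, Finset.card_vadd_finset]
    _ ≤ ((j + 1) • insert p S).card := Finset.card_le_card <| Finset.union_subset
        (Finset.nsmul_subset_nsmul_left (Finset.subset_insert _ _)) fun x hx => by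
          obtain ⟨y, hy, rfl⟩ := Finset.mem_vadd_finset.1 hx
          rw [succ_nsmul']
          have hbS : b ⊆ insert p S := by exact_mod_cast hb.trans hfacet
          exact Finset.add_mem_add (Finset.mem_insert_self _ _)
            (Finset.nsmul_subset_nsmul_left hbS hy)

-- Adding the points in increasing order of a generic functional `φ` makes each new point either
-- linearly independent of the previous ones or strictly separated from them.
theorem mul_choose_le_card_succ_nsmul {S : Finset V} {h : V →ₗ[F] F} (hS : ∀ s ∈ S, h s = 1)
    {c d : ℕ} (hrank : Module.finrank F (span F (S : Set V)) = d + 1) (hcard : S.card = c + d)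
    (j : ℕ) : c * (d + j).choose d ≤ ((j + 1) • S).card := by
  obtain ⟨φ, hφ⟩ := exists_linearMap_injOn (F := F) S
  induction S using Finset.induction_on_max_value φ generalizing c d j with
  | empty =>
    rw [Finset.coe_empty, span_empty, finrank_bot] at hrank
    omega
  | insert p S hpS hmax ih =>
    have hcard_le : S.card + 1 ≤ ((j + 1) • insert p S).card := by
      rw [← Finset.card_insert_of_notMem hpS]
      exact Finset.card_le_card_nsmul j.succ_ne_zero
    have hSh : ∀ s ∈ S, h s = 1 := fun s hs => hS s (Finset.mem_insert_of_mem hs)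
    have hSφ : Set.InjOn φ S := hφ.mono (by simp)
    rw [Finset.coe_insert] at hrank
    rw [Finset.card_insert_of_notMem hpS] at hcard
    obtain _ | d := d
    · rwa [zero_add, Nat.choose_zero_right, mul_one, ← add_zero c, ← hcard]
    obtain _ | c := c
    · simp
    by_cases hp : p ∈ span F (S : Set V)
    · have hrankS := hrank
      rw [span_insert_eq_span hp] at hrankS
      have hne : S.Nonempty := Finset.nonempty_iff_ne_empty.2 <| by
        rintro rfl
        rw [Finset.coe_empty, span_empty, finrank_bot] at hrankS
        omega
      obtain ⟨q, hq, hqmax⟩ := S.exists_max_image φ hne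
      have hφqp : φ q < φ p := (hmax q hq).lt_of_ne
        (hφ.ne (by simp [hq]) (by simp) (ne_of_mem_of_not_mem hq hpS))
      have hstep := card_nsmul_add_choose_le_card_nsmul_insert (l := φ - φ q • h)
        (fun s hs => by simpa [hSh s hs] using hqmax s hs)
        (by simpa [hS p] using hφqp) hrank j
      have hS_le := ih (c := c) hSh hrankS (by omega) j hSφ
      rw [Nat.succ_mul]
      omega
    · rw [finrank_span_insert_of_notMem hp] at hrank
      exact mul_choose_succ_le_card_succ_nsmul_insert hp
        (fun i => ih hSh (by omega) (by omega) i hSφ) j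

end Freiman

section TorsionFree

variable {G : Type*} [AddCommGroup G] [DecidableEq G]

theorem nsmul_image_prodMk_one_subset {V F : Type*} [AddCommMonoid V] [AddCommMonoidWithOne F]
    [DecidableEq V] [DecidableEq F] (f : G →+ V) (S : Finset G) (j : ℕ) :
    j • S.image (fun g => (f g, (1 : F))) ⊆ (j • S).image fun g => (f g, (j : F)) := by
  induction j with
  | zero => simp [← Finset.singleton_zero, ← Prod.mk_zero_zero]
  | succ j ih =>
    rw [succ_nsmul, Finset.add_subset_iff]
    intro x hx y hy
    obtain ⟨g, hg, rfl⟩ := Finset.mem_image.1 (ih hx)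
    obtain ⟨g', hg', rfl⟩ := Finset.mem_image.1 hy
    refine Finset.mem_image.2 ⟨g + g', ?_, by simp⟩
    rw [succ_nsmul]
    exact Finset.add_mem_add hg hg'

-- The extra coordinate `1` in `ψ` turns affine dimension `D` into linear rank `D + 1`.
theorem exists_mul_choose_le_card_succ_nsmul [IsAddTorsionFree G] {S : Finset G}
    (hne : S.Nonempty) {ι : Type*} [Fintype ι] {e : ι → G} (he : LinearIndependent ℤ e)
    (heS : ∀ i, e i ∈ S) :
    ∃ c D : ℕ, Fintype.card ι ≤ D + 1 ∧ 1 ≤ c ∧ S.card = c + D ∧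
      ∀ j, c * (D + j).choose D ≤ ((j + 1) • S).card := by
  classical
  let ψ : G → DivisibleHull G × ℚ := fun g => (DivisibleHull.coeAddMonoidHom G g, 1)
  have hψ : Function.Injective ψ := fun g g' h => DivisibleHull.coe_injective (congrArg Prod.fst h)
  have hcard : (S.image ψ).card = S.card := Finset.card_image_of_injective _ hψ
  have hindep : LinearIndependent ℚ (ψ ∘ e) := by
    refine LinearIndependent.of_comp (LinearMap.fst ℚ (DivisibleHull G) ℚ) ?_
    rw [← LinearIndependent.iff_fractionRing ℤ ℚ]
    exact he.map' (DivisibleHull.coeAddMonoidHom G).toIntLinearMap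
      (LinearMap.ker_eq_bot.2 DivisibleHull.coe_injective)
  let U := Submodule.span ℚ (S.image ψ : Set (DivisibleHull G × ℚ))
  have : Module.Finite ℚ U := Module.Finite.span_of_finite ℚ (S.image ψ).finite_toSet
  have hψU : ∀ g ∈ S, ψ g ∈ U := fun g hg =>
    Submodule.subset_span (Finset.mem_coe.2 (Finset.mem_image_of_mem _ hg))
  have hrank_le : Module.finrank ℚ U ≤ S.card := hcard ▸ finrank_span_finset_le_card _
  have hle_rank : Fintype.card ι ≤ Module.finrank ℚ U := by
    rw [← finrank_span_eq_card hindep]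
    exact Submodule.finrank_mono
      (Submodule.span_le.2 (Set.range_subset_iff.2 fun i => hψU _ (heS i)))
  obtain ⟨D, hD⟩ : ∃ D, Module.finrank ℚ U = D + 1 := by
    refine Nat.exists_eq_succ_of_ne_zero fun h0 => ?_
    obtain ⟨g, hg⟩ := hne
    have hψg := hψU g hg
    rw [Submodule.finrank_eq_zero.1 h0, Submodule.mem_bot] at hψg
    exact one_ne_zero (congrArg Prod.snd hψg)
  refine ⟨S.card - D, D, by omega, by omega, by omega, fun j => ?_⟩
  calc (S.card - D) * (D + j).choose D
      ≤ ((j + 1) • S.image ψ).card :=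
        mul_choose_le_card_succ_nsmul (h := LinearMap.snd ℚ _ ℚ) (by simp [ψ]) hD (by omega) j
    _ ≤ ((j + 1) • S).card := (Finset.card_le_card
        (nsmul_image_prodMk_one_subset _ S _)).trans Finset.card_image_le

end TorsionFree

section ValueSet

variable {k K Γ₀ : Type*} [Field k] [Field K] [Algebra k K] [LinearOrderedCommGroupWithZero Γ₀]

/-- Every element of the valuation ring is congruent to a constant modulo the maximal ideal: when
`v` is trivial on `k`, this says that the residue field of `v` is `k`. -/
def HasResidueField (k : Type*) [Field k] [Algebra k K] (v : Valuation K Γ₀) : Prop :=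
  ∀ x : K, v x ≤ 1 → ∃ c : k, v (x - algebraMap k K c) < 1

/-- The values of the nonzero elements of a subspace, in additive notation. -/
def valueSet (v : Valuation K Γ₀) (A : Submodule k K) : Set (Additive Γ₀ˣ) :=
  {γ | ∃ a ∈ A, v a = γ.toMul}

theorem valuation_smul (v : Valuation K Γ₀) [v.IsTrivialOn k] {c : k} (hc : c ≠ 0) (x : K) :
    v (c • x) = v x := by
  rw [Algebra.smul_def, map_mul, Valuation.IsTrivialOn.eq_one c hc, one_mul]

theorem linearIndependent_of_valuation_injective (v : Valuation K Γ₀) [v.IsTrivialOn k]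
    {ι : Type*} {r : ι → K} (hr : ∀ i, r i ≠ 0) (hinj : Function.Injective (v ∘ r)) :
    LinearIndependent k r := by
  classical
  refine linearIndependent_iff'.2 fun s c hsum => ?_
  by_contra! hne
  obtain ⟨i, hi, hci⟩ := hne
  obtain ⟨m, hm, hmax⟩ := (s.filter (c · ≠ 0)).exists_max_image (fun i => v (r i))
    ⟨i, Finset.mem_filter.2 ⟨hi, hci⟩⟩
  obtain ⟨hms, hcm⟩ := Finset.mem_filter.1 hm
  have hvm : v (c m • r m) = v (r m) := valuation_smul v hcm _
  have hvsum : v (∑ i ∈ s, c i • r i) = v (c m • r m) := by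
    refine v.map_sum_eq_of_lt hms fun i hi => ?_
    obtain ⟨his, him⟩ := Finset.mem_sdiff.1 hi
    by_cases hci : c i = 0
    · simpa [hci, hvm, zero_lt_iff] using hr m
    · rw [hvm, valuation_smul v hci]
      exact (hmax i (Finset.mem_filter.2 ⟨his, hci⟩)).lt_of_ne
        (hinj.ne (Finset.notMem_singleton.1 him))
  rw [hsum, map_zero, hvm, eq_comm, map_eq_zero] at hvsum
  exact hr m hvsum

-- An element of `A \ B` of minimal value can be lowered further by subtracting a multiple of an
-- element of `B` with the same value.
theorem le_of_valueSet_subset {v : Valuation K Γ₀} (hv : HasResidueField k v)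
    {A B : Submodule k K} (hBA : B ≤ A) (hfin : (valueSet v A).Finite)
    (hAB : valueSet v A ⊆ valueSet v B) : A ≤ B := by
  have hvalue : ∀ a ∈ A, a ∉ B → ∃ γ : Additive Γ₀ˣ, v a = γ.toMul := fun a _ haB =>
    ⟨.ofMul (Units.mk0 (v a) ((v.ne_zero_iff).2 fun h => haB (h ▸ zero_mem B))), rfl⟩
  by_contra hle
  obtain ⟨x, hxA, hxB⟩ := Set.not_subset.1 hle
  obtain ⟨γ₀, hγ₀⟩ := hvalue x hxA hxB
  obtain ⟨γ, ⟨a, haA, haB, haγ⟩, hmin⟩ := Set.exists_min_image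
    {γ : Additive Γ₀ˣ | ∃ a ∈ A, a ∉ B ∧ v a = γ.toMul} id
    (hfin.subset fun γ ⟨a, haA, _, haγ⟩ => ⟨a, haA, haγ⟩) ⟨γ₀, x, hxA, hxB, hγ₀⟩
  obtain ⟨b, hbB, hbγ⟩ := hAB ⟨a, haA, haγ⟩
  have hb : v b ≠ 0 := hbγ ▸ Units.ne_zero _
  obtain ⟨c, hc⟩ := hv (a / b) (by rw [map_div₀, haγ, ← hbγ, div_self hb])
  have hsub : v (a - c • b) < γ.toMul := by
    have : a - c • b = (a / b - algebraMap k K c) * b := by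
      rw [sub_mul, div_mul_cancel₀ _ ((v.ne_zero_iff).1 hb), Algebra.smul_def]
    rw [this, map_mul, ← hbγ]
    exact mul_lt_of_lt_one_left (zero_lt_iff.2 hb) hc
  have hsubA : a - c • b ∈ A := sub_mem haA (A.smul_mem c (hBA hbB))
  have hsubB : a - c • b ∉ B := fun h => haB (by simpa using add_mem h (B.smul_mem c hbB))
  obtain ⟨γ', hγ'⟩ := hvalue _ hsubA hsubB
  rw [hγ'] at hsub
  exact (hmin γ' ⟨_, hsubA, hsubB, hγ'⟩).not_gt hsub

theorem finite_valueSet_and_ncard_eq_finrank {v : Valuation K Γ₀} [v.IsTrivialOn k]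
    (hv : HasResidueField k v) (A : Submodule k K) [FiniteDimensional k A] :
    (valueSet v A).Finite ∧ (valueSet v A).ncard = Module.finrank k A := by
  choose r hrA hrv using fun γ : valueSet v A => γ.2
  have hrindep : LinearIndependent k r := linearIndependent_of_valuation_injective v
    (fun γ h => Units.ne_zero _ ((hrv γ).symm.trans (h ▸ map_zero v))) fun γ γ' h => by
      simp only [Function.comp_apply, hrv] at h
      exact Subtype.ext (Units.val_injective h)
  have hrspan : Submodule.span k (Set.range r) ≤ A :=
    Submodule.span_le.2 (Set.range_subset_iff.2 hrA)
  have hfin : Finite (valueSet v A) :=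
    (LinearIndependent.of_comp (v := fun γ => (⟨r γ, hrA γ⟩ : A)) A.subtype hrindep).finite
  have := Fintype.ofFinite (valueSet v A)
  have hspan : Submodule.span k (Set.range r) = A := hrspan.antisymm <|
    le_of_valueSet_subset hv hrspan hfin fun γ hγ =>
      ⟨r ⟨γ, hγ⟩, Submodule.subset_span (Set.mem_range_self _), hrv ⟨γ, hγ⟩⟩
  refine ⟨hfin, ?_⟩
  calc (valueSet v A).ncard = Fintype.card (valueSet v A) := by
        rw [← Nat.card_coe_set_eq, Nat.card_eq_fintype_card]
    _ = Module.finrank k A := by rw [← finrank_span_eq_card hrindep, hspan]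

theorem nsmul_valueSet_subset (v : Valuation K Γ₀) (A : Submodule k K) (j : ℕ) :
    j • valueSet v A ⊆ valueSet v (A ^ j) := by
  induction j with
  | zero => exact Set.singleton_subset_iff.2 ⟨1, by simp, by simp⟩
  | succ j ih =>
    rw [succ_nsmul, Set.add_subset_iff]
    rintro γ hγ γ' ⟨b, hb, hbγ⟩
    obtain ⟨a, ha, haγ⟩ := ih hγ
    exact ⟨a * b, pow_succ A j ▸ Submodule.mul_mem_mul ha hb, by simp [haγ, hbγ]⟩

theorem exists_mul_choose_le_finrank_pow_succ_of_valuation {v : Valuation K Γ₀} [v.IsTrivialOn k]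
    (hv : HasResidueField k v) {W : Submodule k K} [FiniteDimensional k W] (hW : W ≠ ⊥)
    {ι : Type*} [Fintype ι] {γ : ι → Additive Γ₀ˣ} (hγ : LinearIndependent ℤ γ)
    (hγW : ∀ i, γ i ∈ valueSet v W) :
    ∃ c D : ℕ, Fintype.card ι ≤ D + 1 ∧ 1 ≤ c ∧ Module.finrank k W = c + D ∧
      ∀ j, c * (D + j).choose D ≤ Module.finrank k (W ^ (j + 1) : Submodule k K) := by
  classical
  obtain ⟨hfin, hcard⟩ := finite_valueSet_and_ncard_eq_finrank hv W
  have hne : hfin.toFinset.Nonempty := by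
    rw [← Finset.card_pos, ← Set.ncard_eq_toFinset_card _ hfin, hcard, Module.finrank_pos_iff]
    exact (Submodule.nontrivial_iff_ne_bot).2 hW
  obtain ⟨c, D, hD, hc, hcD, hle⟩ := exists_mul_choose_le_card_succ_nsmul hne hγ
    fun i => hfin.mem_toFinset.2 (hγW i)
  refine ⟨c, D, hD, hc, by rw [← hcard, ← hcD, Set.ncard_eq_toFinset_card _ hfin],
    fun j => (hle j).trans ?_⟩
  have : FiniteDimensional k (W ^ (j + 1) : Submodule k K) :=
    Module.Finite.iff_fg.2 ((Module.Finite.iff_fg.1 ‹_›).pow _)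
  obtain ⟨hfin', hcard'⟩ := finite_valueSet_and_ncard_eq_finrank hv (W ^ (j + 1))
  rw [← hcard', ← Set.ncard_coe_finset]
  refine Set.ncard_le_ncard ?_ hfin'
  rw [Finset.coe_nsmul, hfin.coe_toFinset]
  exact nsmul_valueSet_subset v W (j + 1)

end ValueSet

section ExtendValuation

variable {R K Γ : Type*} [CommRing R] [Field K] [LinearOrderedCommMonoidWithZero Γ]
  [Nontrivial Γ]

/-- For a valuation `w` of `R` and an embedding `φ` of `R` in a field, the local ring of fractions
`φ f / φ g` with `w f ≤ w g ≠ 0`. -/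
def fractionSubring (w : Valuation R Γ) {φ : R →+* K} (hφ : Function.Injective φ) : Subring K where
  carrier := {x | ∃ f g, w g ≠ 0 ∧ w f ≤ w g ∧ x = φ f / φ g}
  one_mem' := ⟨1, 1, by simp⟩
  zero_mem' := ⟨0, 1, by simp⟩
  mul_mem' := by
    rintro _ _ ⟨f, g, hg, hfg, rfl⟩ ⟨f', g', hg', hfg', rfl⟩
    refine ⟨f * f', g * g', by simp [hg, hg'], ?_, by simp [div_mul_div_comm]⟩
    simpa only [map_mul] using mul_le_mul' hfg hfg'
  add_mem' := by
    rintro _ _ ⟨f, g, hg, hfg, rfl⟩ ⟨f', g', hg', hfg', rfl⟩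
    have hφ0 : ∀ {r}, w r ≠ 0 → φ r ≠ 0 := fun hr =>
      (map_ne_zero_iff φ hφ).2 fun h => hr (h ▸ map_zero w)
    refine ⟨f * g' + g * f', g * g', by simp [hg, hg'], w.map_add_le ?_ ?_, by
      simp [div_add_div _ _ (hφ0 hg) (hφ0 hg')]⟩
    · simpa only [map_mul] using mul_le_mul_left hfg _
    · simpa only [map_mul] using mul_le_mul_right hfg' _
  neg_mem' := by
    rintro _ ⟨f, g, hg, hfg, rfl⟩
    exact ⟨-f, g, hg, by rwa [w.map_neg], by simp [neg_div]⟩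

/-- The maximal ideal of `fractionSubring`: the fractions `φ f / φ g` with `w f < w g`. -/
def fractionIdeal (w : Valuation R Γ) {φ : R →+* K} (hφ : Function.Injective φ) :
    Ideal (fractionSubring w hφ) where
  carrier := {x | ∃ f g, w f < w g ∧ (x : K) = φ f / φ g}
  zero_mem' := ⟨0, 1, by simp⟩
  add_mem' := by
    rintro ⟨_, _⟩ ⟨_, _⟩ ⟨f, g, hfg, rfl⟩ ⟨f', g', hfg', rfl⟩
    have hg := hfg.pos.ne'
    have hg' := hfg'.pos.ne'
    have hφ0 : ∀ {r}, w r ≠ 0 → φ r ≠ 0 := fun hr =>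
      (map_ne_zero_iff φ hφ).2 fun h => hr (h ▸ map_zero w)
    refine ⟨f * g' + g * f', g * g', w.map_add_lt ?_ ?_, by
      simp [div_add_div _ _ (hφ0 hg) (hφ0 hg')]⟩
    · simpa only [map_mul] using mul_lt_mul_of_pos_right hfg (zero_lt_iff.2 hg')
    · simpa only [map_mul] using mul_lt_mul_of_pos_left hfg' (zero_lt_iff.2 hg)
  smul_mem' := by
    rintro ⟨_, f', g', hg', hfg', rfl⟩ ⟨_, _⟩ ⟨f, g, hfg, rfl⟩
    refine ⟨f' * f, g' * g, ?_, by simp [div_mul_div_comm]⟩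
    simp only [map_mul]
    exact (mul_le_mul_left hfg' _).trans_lt (mul_lt_mul_of_pos_left hfg (zero_lt_iff.2 hg'))

theorem fractionIdeal_ne_top (w : Valuation R Γ) {φ : R →+* K} (hφ : Function.Injective φ) :
    fractionIdeal w hφ ≠ ⊤ := by
  intro h
  obtain ⟨f, g, hfg, h1⟩ := (Ideal.eq_top_iff_one _).1 h
  have hg : φ g ≠ 0 := (map_ne_zero_iff φ hφ).2 fun h => hfg.pos.ne' (h ▸ map_zero w)
  rw [Subring.coe_one, eq_comm, div_eq_one_iff_eq hg, hφ.eq_iff] at h1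
  exact hfg.ne (h1 ▸ rfl)

theorem exists_valuationSubring_valuation_le_iff {w : Valuation R Γ} (hw : ∀ r, w r = 0 → r = 0)
    {φ : R →+* K} (hφ : Function.Injective φ) :
    ∃ B : ValuationSubring K, ∀ f g, B.valuation (φ f) ≤ B.valuation (φ g) ↔ w f ≤ w g := by
  obtain ⟨B, hAB, hIB⟩ :=
    (fractionIdeal w hφ).image_subset_nonunits_valuationSubring (fractionIdeal_ne_top w hφ)
  have hpos : ∀ {g}, w g ≠ 0 → 0 < B.valuation (φ g) := fun hg =>
    zero_lt_iff.2 <| (map_ne_zero _).2 <| (map_ne_zero_iff φ hφ).2 fun h => hg (h ▸ map_zero w)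
  refine ⟨B, fun f g => ⟨fun hB => not_lt.1 fun hlt => hB.not_gt ?_, fun hle => ?_⟩⟩
  · have hf : w f ≠ 0 := hlt.pos.ne'
    have hmem : φ g / φ f ∈ B.nonunits :=
      hIB ⟨⟨_, g, f, hf, hlt.le, rfl⟩, ⟨g, f, hlt, rfl⟩, rfl⟩
    rwa [B.mem_nonunits_iff, map_div₀, div_lt_one₀ (hpos hf)] at hmem
  · by_cases hg : w g = 0
    · rw [hw g hg, hw f (le_zero_iff.1 (hg ▸ hle))]
    · have hmem : φ f / φ g ∈ B := hAB ⟨f, g, hg, hle, rfl⟩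
      rwa [← B.valuation_le_one_iff, map_div₀, div_le_one₀ (hpos hg)] at hmem

end ExtendValuation

section DegreeValuation

variable {σ k : Type*} [Field k]

open scoped Classical in
/-- The leading exponent with respect to a monomial order, as a valuation. -/
noncomputable def degreeValuation (k : Type*) [Field k] (m : MonomialOrder σ) :
    Valuation (MvPolynomial σ k) (WithZero (Multiplicative m.syn)) where
  toFun f := if f = 0 then 0 else WithZero.coe (.ofAdd (m.toSyn (m.degree f)))
  map_zero' := if_pos rfl
  map_one' := by simp
  map_mul' f g := by
    by_cases hf : f = 0
    · simp [hf]
    by_cases hg : g = 0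
    · simp [hg]
    simp [hf, hg, m.degree_mul hf hg]
  map_add_le_max' f g := by
    by_cases hf : f = 0
    · simp [hf]
    by_cases hg : g = 0
    · simp [hg]
    by_cases hfg : f + g = 0
    · simp [hfg]
    have := m.degree_add_le (f := f) (g := g)
    simpa [hf, hg, hfg] using this

theorem degreeValuation_of_ne_zero (m : MonomialOrder σ) {f : MvPolynomial σ k} (hf : f ≠ 0) :
    degreeValuation k m f = WithZero.coe (.ofAdd (m.toSyn (m.degree f))) :=
  if_neg hf

theorem eq_zero_of_degreeValuation_eq_zero {m : MonomialOrder σ} {f : MvPolynomial σ k}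
    (hf : degreeValuation k m f = 0) : f = 0 := by
  by_contra hf0
  exact WithZero.coe_ne_zero ((degreeValuation_of_ne_zero m hf0).symm.trans hf)

theorem degreeValuation_monomial (m : MonomialOrder σ) (a : σ →₀ ℕ) {c : k} (hc : c ≠ 0) :
    degreeValuation k m (monomial a c) = WithZero.coe (.ofAdd (m.toSyn a)) := by
  classical
  rw [degreeValuation_of_ne_zero m (by simpa using hc), m.degree_monomial, if_neg hc]

theorem degreeValuation_sub_monomial_lt {m : MonomialOrder σ} {f : MvPolynomial σ k} {a : σ →₀ ℕ}
    (hf : m.toSyn (m.degree f) ≤ m.toSyn a) :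
    degreeValuation k m (f - monomial a (f.coeff a)) < degreeValuation k m (monomial a 1) := by
  classical
  rw [degreeValuation_monomial m a one_ne_zero]
  set g := f - monomial a (f.coeff a) with hg
  by_cases hg0 : g = 0
  · simp [hg0]
  rw [degreeValuation_of_ne_zero m hg0, WithZero.coe_lt_coe, Multiplicative.ofAdd_lt]
  refine lt_of_le_of_ne ?_ fun h => ?_
  · have hmono := (m.degree_monomial_le (d := a) (f.coeff a))
    exact m.degree_sub_le.trans (sup_le hf hmono)
  · have hcoeff := m.coeff_degree_ne_zero_iff.2 hg0
    rw [m.toSyn.injective h, hg, coeff_sub, coeff_monomial, if_pos rfl, sub_self] at hcoeff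
    exact hcoeff rfl

end DegreeValuation

section LeadingExponent

variable {k K Γ₀ σ : Type*} [Field k] [Field K] [Algebra k K] [LinearOrderedCommGroupWithZero Γ₀]

/-- The valuation `v` restricts on `k[z]` to the leading exponent for the monomial order `m`, up to
equivalence. -/
def ExtendsDegree (m : MonomialOrder σ) (v : Valuation K Γ₀) (k : Type*) [Field k] [Algebra k K]
    (z : σ → K) : Prop :=
  ∀ f g : MvPolynomial σ k,
    v (aeval z f) ≤ v (aeval z g) ↔ degreeValuation k m f ≤ degreeValuation k m g

theorem exists_extendsDegree (m : MonomialOrder σ) {z : σ → K} (hz : AlgebraicIndependent k z) :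
    ∃ B : ValuationSubring K, ExtendsDegree m B.valuation k z :=
  exists_valuationSubring_valuation_le_iff (w := degreeValuation k m)
    (fun _ => eq_zero_of_degreeValuation_eq_zero) (φ := (aeval z : _ →ₐ[k] K).toRingHom) hz

variable {m : MonomialOrder σ} {v : Valuation K Γ₀} {z : σ → K}

theorem ExtendsDegree.lt_iff (hv : ExtendsDegree m v k z) (f g : MvPolynomial σ k) :
    v (aeval z f) < v (aeval z g) ↔ degreeValuation k m f < degreeValuation k m g := by
  simpa only [not_le] using (hv g f).not

theorem ExtendsDegree.eq_iff (hv : ExtendsDegree m v k z) (f g : MvPolynomial σ k) :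
    v (aeval z f) = v (aeval z g) ↔ degreeValuation k m f = degreeValuation k m g := by
  simp only [le_antisymm_iff, hv f g, hv g f]

theorem ExtendsDegree.isTrivialOn (hv : ExtendsDegree m v k z) : v.IsTrivialOn k where
  eq_one c hc := by
    have h : degreeValuation k m (C c) = degreeValuation k m (C 1) :=
      (degreeValuation_monomial m 0 hc).trans (degreeValuation_monomial m 0 one_ne_zero).symm
    simpa using (hv.eq_iff (C c) (C 1)).2 h

theorem ExtendsDegree.valuation_aeval_monomial_injective (hv : ExtendsDegree m v k z) :
    Function.Injective fun a : σ →₀ ℕ => v (aeval z (monomial a (1 : k))) := by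
  intro a b hab
  have h := (hv.eq_iff _ _).1 hab
  rw [degreeValuation_monomial m a one_ne_zero, degreeValuation_monomial m b one_ne_zero] at h
  exact m.toSyn.injective (Multiplicative.ofAdd.injective (WithZero.coe_injective h))

theorem linearIndependent_int_of_nat {ι G : Type*} [AddCommGroup G] {γ : ι → G}
    (hγ : LinearIndependent ℕ γ) : LinearIndependent ℤ γ := by
  refine linearIndependent_iff.2 fun l hl => ?_
  set pos : ι →₀ ℕ := l.mapRange Int.toNat rfl
  set neg : ι →₀ ℕ := l.mapRange (fun n => (-n).toNat) rfl
  have hcast : ∀ a : ι →₀ ℕ, Finsupp.linearCombination ℤ γ (a.mapRange Nat.cast rfl) =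
      Finsupp.linearCombination ℕ γ a := fun a => by
    simp [Finsupp.linearCombination_apply, Finsupp.sum_mapRange_index]
  have hsplit : l = pos.mapRange Nat.cast rfl - neg.mapRange Nat.cast rfl := by
    ext i
    simp [pos, neg]
  have heq : pos = neg := hγ <| by
    rw [hsplit, map_sub, hcast, hcast] at hl
    exact sub_eq_zero.1 hl
  rw [hsplit, heq, sub_self]

theorem ExtendsDegree.linearIndependent (hv : ExtendsDegree m v k z) (hz : ∀ i, v (z i) ≠ 0) :
    LinearIndependent ℤ fun i => Additive.ofMul (Units.mk0 (v (z i)) (hz i)) := by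
  refine linearIndependent_int_of_nat fun a b hab =>
    hv.valuation_aeval_monomial_injective ?_
  have hval : ∀ a : σ →₀ ℕ, v (aeval z (monomial a (1 : k))) = (Finsupp.linearCombination ℕ
      (fun i => Additive.ofMul (Units.mk0 (v (z i)) (hz i))) a).toMul := fun a => by
    simp [aeval_monomial, Finsupp.linearCombination_apply, Finsupp.sum, Finsupp.prod]
  simp only [hval, hab]

theorem exists_sum_aeval_mul_pow_eq_zero (hz : IsTranscendenceBasis k z) (x : K) :
    ∃ (s : Finset ℕ) (a : ℕ → MvPolynomial σ k),
      s.Nonempty ∧ (∀ i ∈ s, a i ≠ 0) ∧ ∑ i ∈ s, aeval z (a i) * x ^ i = 0 := by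
  obtain ⟨p, hp0, hp⟩ := hz.isAlgebraic.isAlgebraic x
  refine ⟨p.support, fun i => hz.1.aevalEquiv.symm (p.coeff i),
    Polynomial.support_nonempty.2 hp0, fun i hi => ?_, ?_⟩
  · simpa using hi
  · rw [← hp, Polynomial.aeval_def, Polynomial.eval₂_eq_sum, Polynomial.sum]
    refine Finset.sum_congr rfl fun i _ => ?_
    rw [← hz.1.algebraMap_aevalEquiv, AlgEquiv.apply_symm_apply]

theorem exists_valuation_sub_lt_one_of_valuation_aeval_lt_one [IsAlgClosed k] [v.IsTrivialOn k]
    {q : Polynomial k} (hq : q ≠ 0) {x : K} (hx : v (q.aeval x) < 1) :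
    ∃ c : k, v (x - algebraMap k K c) < 1 := by
  by_contra! hle
  refine hx.not_ge ?_
  rw [(IsAlgClosed.splits q).eq_prod_roots, map_mul, map_mul, Polynomial.aeval_C,
    Valuation.IsTrivialOn.eq_one _ (Polynomial.leadingCoeff_ne_zero.2 hq), one_mul,
    map_multiset_prod, map_multiset_prod]
  refine Multiset.one_le_prod_of_one_le ?_
  simpa using fun _ r _ _ h => h ▸ hle r

-- Dividing an algebraic equation of `x` over `k[z]` by the largest leading monomial `e` of its
-- coefficients leaves a polynomial `q` over `k` with `v (q x) < 1`; then split `q`.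
theorem ExtendsDegree.hasResidueField [IsAlgClosed k] (hv : ExtendsDegree m v k z)
    (hz : IsTranscendenceBasis k z) : HasResidueField k v := by
  intro x hx
  have := hv.isTrivialOn
  obtain ⟨s, a, hs, ha0, hsum⟩ := exists_sum_aeval_mul_pow_eq_zero hz x
  obtain ⟨i₀, hi₀, hmax⟩ := s.exists_max_image (fun i => m.toSyn (m.degree (a i))) hs
  set e := m.degree (a i₀)
  set q : Polynomial k := ∑ i ∈ s, Polynomial.monomial i ((a i).coeff e) with hq
  have hqcoeff : q.coeff i₀ = (a i₀).coeff e := by simp [hq, Polynomial.coeff_monomial, hi₀]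
  have hq0 : q ≠ 0 := fun h =>
    m.coeff_degree_ne_zero_iff.2 (ha0 i₀ hi₀)
      (hqcoeff.symm.trans (by rw [h, Polynomial.coeff_zero]))
  refine exists_valuation_sub_lt_one_of_valuation_aeval_lt_one hq0 ?_
  have hlead : aeval z (monomial e (1 : k)) * q.aeval x =
      -∑ i ∈ s, aeval z (a i - monomial e ((a i).coeff e)) * x ^ i := by
    simp only [map_sub, sub_mul, Finset.sum_sub_distrib, hsum, zero_sub, neg_neg, hq, map_sum,
      Finset.mul_sum]
    refine Finset.sum_congr rfl fun i _ => ?_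
    simp only [aeval_monomial, Polynomial.aeval_monomial, map_one]
    ring
  have hpos : 0 < v (aeval z (monomial e (1 : k))) := by
    have h0 := (hv.lt_iff 0 (monomial e 1)).2 (by simp [degreeValuation_monomial])
    rwa [map_zero, map_zero] at h0
  have hlt : v (aeval z (monomial e (1 : k)) * q.aeval x) < v (aeval z (monomial e (1 : k))) := by
    rw [hlead, Valuation.map_neg]
    refine v.map_sum_lt hpos.ne' fun i hi => ?_
    rw [map_mul, map_pow]
    exact (mul_le_of_le_one_right' (pow_le_one₀ zero_le hx)).trans_lt
      ((hv.lt_iff _ _).2 (degreeValuation_sub_monomial_lt (hmax i hi)))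
  rwa [map_mul, mul_lt_iff_lt_one_right hpos] at hlt

end LeadingExponent

section SubspacePowers

theorem exists_mul_choose_le_finrank_pow_succ {k K : Type*} [Field k] [IsAlgClosed k] [Field K]
    [Algebra k K] {W : Submodule k K} [FiniteDimensional k W] (hW : W ≠ ⊥)
    [Algebra.IsAlgebraic (Algebra.adjoin k (W : Set K)) K] :
    ∃ c D, Algebra.trdeg k K ≤ (D + 1 : ℕ) ∧ 1 ≤ c ∧ Module.finrank k W = c + D ∧
      ∀ j, c * (D + j).choose D ≤ Module.finrank k (W ^ (j + 1) : Submodule k K) := by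
  obtain ⟨T, hTW, hT⟩ := exists_isTranscendenceBasis_subset (R := k) (W : Set K)
  have : Finite T :=
    (LinearIndependent.of_comp (v := fun t : T => (⟨t, hTW t.2⟩ : W)) W.subtype
      hT.1.linearIndependent).finite
  have := Fintype.ofFinite T
  let : LinearOrder T := IsWellOrder.linearOrder WellOrderingRel
  obtain ⟨B, hB⟩ := exists_extendsDegree (MonomialOrder.lex (σ := T)) hT.1
  have := hB.isTrivialOn
  have hT0 : ∀ t : T, B.valuation t ≠ 0 := fun t => (map_ne_zero _).2 (hT.1.ne_zero t)
  obtain ⟨c, D, hTD, hrest⟩ := exists_mul_choose_le_finrank_pow_succ_of_valuation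
    (hB.hasResidueField hT) hW (hB.linearIndependent hT0) fun t => ⟨t, hTW t.2, rfl⟩
  refine ⟨c, D, ?_, hrest⟩
  rw [← hT.cardinalMk_eq_trdeg, Cardinal.mk_fintype]
  exact_mod_cast hTD

theorem isAlgebraic_adjoin_of_pow_mem {k R K : Type*} [Field k] [CommRing R] [Algebra k R] [Field K]
    [Algebra k K] [Algebra R K] [IsScalarTower k R K] [IsFractionRing R K] {s : Set R}
    (hs : Algebra.adjoin k s = ⊤) {W : Set K} {m : ℕ} (hm : 0 < m)
    (hsW : ∀ x ∈ s, algebraMap R K x ^ m ∈ W) :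
    Algebra.IsAlgebraic (Algebra.adjoin k W) K := by
  have hint : ∀ r : R, IsIntegral (Algebra.adjoin k W) (algebraMap R K r) := fun r => by
    induction (hs ▸ Algebra.mem_top : r ∈ Algebra.adjoin k s) using Algebra.adjoin_induction with
    | mem x hx =>
      exact .of_pow hm
        (isIntegral_algebraMap (x := (⟨_, Algebra.subset_adjoin (hsW x hx)⟩ : Algebra.adjoin k W)))
    | algebraMap c =>
      rw [← IsScalarTower.algebraMap_apply k R K,
        IsScalarTower.algebraMap_apply k (Algebra.adjoin k W) K]
      exact isIntegral_algebraMap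
    | add x y _ _ hx hy => simpa only [map_add] using hx.add hy
    | mul x y _ _ hx hy => simpa only [map_mul] using hx.mul hy
  refine ⟨fun x => ?_⟩
  obtain ⟨a, b, -, rfl⟩ := IsFractionRing.div_surjective R x
  rw [div_eq_mul_inv]
  exact (hint a).isAlgebraic.mul (hint b).isAlgebraic.inv

theorem exists_mul_choose_le_finrank_pow_succ_of_isDomain {k R : Type*} [Field k] [IsAlgClosed k]
    [CommRing R] [IsDomain R] [Algebra k R] {s : Set R} (hs : Algebra.adjoin k s = ⊤)
    {W : Submodule k R} [FiniteDimensional k W] (hW : W ≠ ⊥) {m : ℕ} (hm : 0 < m)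
    (hsW : ∀ x ∈ s, x ^ m ∈ W) :
    ∃ c D, Algebra.trdeg k R ≤ (D + 1 : ℕ) ∧ 1 ≤ c ∧ Module.finrank k W = c + D ∧
      ∀ j, c * (D + j).choose D ≤ Module.finrank k (W ^ (j + 1) : Submodule k R) := by
  let φ := IsScalarTower.toAlgHom k R (FractionRing R)
  have hφ : Function.Injective φ := IsFractionRing.injective R (FractionRing R)
  have hfinrank : ∀ A : Submodule k R,
      Module.finrank k (A.map φ.toLinearMap) = Module.finrank k A := fun A =>
    (Submodule.equivMapOfInjective φ.toLinearMap hφ A).finrank_eq.symm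
  have := isAlgebraic_adjoin_of_pow_mem (K := FractionRing R) (W := W.map φ.toLinearMap) hs hm
    fun x hx => ⟨x ^ m, hsW x hx, map_pow φ x m⟩
  obtain ⟨c, D, htrdeg, hc, hcD, hpow⟩ := exists_mul_choose_le_finrank_pow_succ
    (W := W.map φ.toLinearMap) fun h =>
      hW (Submodule.map_injective_of_injective hφ (h.trans (Submodule.map_bot _).symm))
  refine ⟨c, D, (trdeg_le_of_injective φ hφ).trans htrdeg, hc, (hfinrank W).symm.trans hcD,
    fun j => ?_⟩
  rw [← hfinrank, Submodule.map_pow]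
  exact hpow j

end SubspacePowers

section Growth

open Module

variable {k : Type*} [Field k]

theorem restrictDegree_mul_le (σ : Type*) (a b : ℕ) :
    restrictDegree σ k a * restrictDegree σ k b ≤ restrictDegree σ k (a + b) := by
  rw [restrictDegree, restrictDegree, ← restrictSupport_add]
  refine restrictSupport_mono k ?_
  rintro _ ⟨m, hm, n, hn, rfl⟩ i
  exact add_le_add (hm i) (hn i)

theorem restrictDegree_mono (σ : Type*) {a b : ℕ} (hab : a ≤ b) :
    restrictDegree σ k a ≤ restrictDegree σ k b :=
  restrictSupport_mono k fun _ hm i => (hm i).trans hab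

theorem finite_restrictDegree_and_finrank_le (σ : Type*) [Fintype σ] (a : ℕ) :
    Module.Finite k (restrictDegree σ k a) ∧
      finrank k (restrictDegree σ k a) ≤ (a + 1) ^ Fintype.card σ := by
  classical
  let toFin : {m : σ →₀ ℕ | ∀ i, m i ≤ a} → σ → Fin (a + 1) :=
    fun m i => ⟨m.1 i, Nat.lt_succ_of_le (m.2 i)⟩
  have hinj : Function.Injective toFin := fun m n h =>
    Subtype.ext <| Finsupp.ext fun i => congrArg Fin.val (congrFun h i)
  have := Fintype.ofInjective toFin hinj
  let b := basisRestrictSupport k {m : σ →₀ ℕ | ∀ i, m i ≤ a}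
  refine ⟨.of_basis b, ?_⟩
  calc finrank k (restrictDegree σ k a) = Fintype.card {m : σ →₀ ℕ | ∀ i, m i ≤ a} :=
        finrank_eq_card_basis b
    _ ≤ Fintype.card (σ → Fin (a + 1)) := Fintype.card_le_of_injective toFin hinj
    _ = (a + 1) ^ Fintype.card σ := by simp

variable {R : Type*} [CommRing R] [Algebra k R]

theorem finrank_mul_le_s6 (A B : Submodule k R) [Module.Finite k A] [Module.Finite k B] :
    finrank k (A * B : Submodule k R) ≤ finrank k A * finrank k B := by
  rw [← Submodule.mulMap_range]
  exact (LinearMap.finrank_range_le _).trans_eq (finrank_tensorProduct ..)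

theorem exists_mem_map_restrictDegree_mul {σ : Type*} {g : MvPolynomial σ k →ₐ[k] R}
    (hg : g.Finite) : ∃ E : Submodule k R, Module.Finite k E ∧ 1 ∈ E ∧
      ∀ x, ∃ a, x ∈ (restrictDegree σ k a).map g.toLinearMap * E := by
  let := g.toRingHom.toAlgebra
  obtain ⟨e, he⟩ := hg.fg_top
  refine ⟨Submodule.span k (insert 1 (e : Set R)), .span_of_finite k (e.finite_toSet.insert 1),
    Submodule.subset_span (.inl rfl), fun x => ?_⟩
  obtain ⟨p, -, rfl⟩ := Submodule.mem_span_finset.1 (he ▸ Submodule.mem_top (x := x))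
  refine ⟨e.sup fun y => (p y).totalDegree, Submodule.sum_mem _ fun y hy => ?_⟩
  refine Submodule.mul_mem_mul (Submodule.mem_map_of_mem ?_) (Submodule.subset_span (.inr hy))
  exact restrictTotalDegree_le_restrictDegree σ k _ <| (mem_restrictTotalDegree σ _ _).2
    (Finset.le_sup (f := fun y => (p y).totalDegree) hy)

theorem exists_le_map_restrictDegree_mul {σ : Type*} {g : MvPolynomial σ k →ₐ[k] R}
    {E : Submodule k R} (hE : ∀ x, ∃ a, x ∈ (restrictDegree σ k a).map g.toLinearMap * E)
    {A : Submodule k R} (hA : A.FG) :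
    ∃ c, A ≤ (restrictDegree σ k c).map g.toLinearMap * E := by
  obtain ⟨t, rfl⟩ := hA
  choose a ha using hE
  refine ⟨t.sup a, Submodule.span_le.2 fun x hx => ?_⟩
  exact mul_le_mul_left (Submodule.map_mono (restrictDegree_mono σ (Finset.le_sup hx))) E (ha x)

theorem pow_mul_le_map_restrictDegree_mul {σ : Type*} {g : MvPolynomial σ k →ₐ[k] R}
    {E W : Submodule k R} {c : ℕ} (hW : W * E ≤ (restrictDegree σ k c).map g.toLinearMap * E)
    (j : ℕ) : W ^ j * E ≤ (restrictDegree σ k (c * j)).map g.toLinearMap * E := by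
  induction j with
  | zero =>
    have h1 : (1 : MvPolynomial σ k) ∈ restrictDegree σ k (c * 0) :=
      (mem_restrictDegree _ _ _).2 (by simp [MvPolynomial.support_one])
    have h1g : (1 : R) ∈ (restrictDegree σ k (c * 0)).map g.toLinearMap := ⟨1, h1, map_one g⟩
    rw [pow_zero]
    exact mul_le_mul_left (Submodule.one_le.2 h1g) E
  | succ j ih =>
    calc W ^ (j + 1) * E = W * (W ^ j * E) := by rw [pow_succ', mul_assoc]
      _ ≤ W * ((restrictDegree σ k (c * j)).map g.toLinearMap * E) := by gcongr
      _ = (restrictDegree σ k (c * j)).map g.toLinearMap * (W * E) := mul_left_comm ..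
      _ ≤ (restrictDegree σ k (c * j)).map g.toLinearMap *
          ((restrictDegree σ k c).map g.toLinearMap * E) := by gcongr
      _ = (restrictDegree σ k (c * j) * restrictDegree σ k c).map g.toLinearMap * E := by
        rw [Submodule.map_mul, mul_assoc]
      _ ≤ (restrictDegree σ k (c * (j + 1))).map g.toLinearMap * E :=
        mul_le_mul_left (Submodule.map_mono (restrictDegree_mul_le σ (c * j) c)) E

theorem exists_finrank_pow_le_of_finite {σ : Type*} [Fintype σ] {g : MvPolynomial σ k →ₐ[k] R}
    (hg : g.Finite) (W : Submodule k R) [Module.Finite k W] :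
    ∃ r c, ∀ j, finrank k (W ^ j : Submodule k R) ≤ r * (c * j + 1) ^ Fintype.card σ := by
  obtain ⟨E, hEfin, h1E, hE⟩ := exists_mem_map_restrictDegree_mul hg
  have hEfg := Module.Finite.iff_fg.1 hEfin
  obtain ⟨c, hc⟩ := exists_le_map_restrictDegree_mul hE
    ((Module.Finite.iff_fg.1 ‹Module.Finite k W›).mul hEfg)
  refine ⟨finrank k E, c, fun j => ?_⟩
  obtain ⟨_, hcard⟩ := finite_restrictDegree_and_finrank_le (k := k) σ (c * j)
  set G := (restrictDegree σ k (c * j)).map g.toLinearMap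
  have : Module.Finite k (G * E : Submodule k R) :=
    Module.Finite.iff_fg.2 ((Module.Finite.iff_fg.1 inferInstance).mul hEfg)
  calc finrank k (W ^ j : Submodule k R) ≤ finrank k (G * E : Submodule k R) :=
        Submodule.finrank_mono <| (le_mul_of_one_le_right' (Submodule.one_le.2 h1E)).trans
          (pow_mul_le_map_restrictDegree_mul hc j)
    _ ≤ finrank k G * finrank k E := finrank_mul_le_s6 _ _
    _ ≤ (c * j + 1) ^ Fintype.card σ * finrank k E :=
      Nat.mul_le_mul_right _ ((Submodule.finrank_map_le _ _).trans hcard)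
    _ = finrank k E * (c * j + 1) ^ Fintype.card σ := mul_comm _ _

theorem exists_finrank_pow_le_of_finiteType [Nontrivial R] [Algebra.FiniteType k R]
    (W : Submodule k R) [Module.Finite k W] :
    ∃ r c s : ℕ, s ≤ Algebra.trdeg k R ∧
      ∀ j, finrank k (W ^ j : Submodule k R) ≤ r * (c * j + 1) ^ s := by
  obtain ⟨s, g, hginj, hg⟩ := exists_finite_inj_algHom_of_fg k R
  obtain ⟨r, c, hrc⟩ := exists_finrank_pow_le_of_finite hg W
  have hindep : AlgebraicIndependent k (g ∘ X) := by
    rwa [AlgebraicIndependent, ← aeval_unique]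
  refine ⟨r, c, s, ?_, by simpa using hrc⟩
  simpa using hindep.lift_cardinalMk_le_trdeg

end Growth

section HomogeneousPiece

open Module

variable {σ k : Type*} [Field k]

/-- The degree `j` part of the homogeneous coordinate ring `k[x] / I`; its dimension is the Hilbert
function of `I` at `j`. -/
noncomputable def homogeneousPiece (I : Ideal (MvPolynomial σ k)) (j : ℕ) :
    Submodule k (MvPolynomial σ k ⧸ I) :=
  (homogeneousSubmodule σ k j).map (Ideal.Quotient.mkₐ k I).toLinearMap

instance [Finite σ] (I : Ideal (MvPolynomial σ k)) (j : ℕ) :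
    Module.Finite k (homogeneousPiece I j) :=
  Module.Finite.iff_fg.2 ((homogeneousSubmodule_fg σ k j).map _)

theorem homogeneousPiece_mul (I : Ideal (MvPolynomial σ k)) (i j : ℕ) :
    homogeneousPiece I (i * j) = homogeneousPiece I i ^ j := by
  rw [homogeneousPiece, homogeneousPiece, ← homogeneousSubmodule_one_pow, pow_mul,
    homogeneousSubmodule_one_pow, Submodule.map_pow]

theorem pow_le_one_sup_pow {R : Type*} [CommRing R] [Algebra k R] (W : Submodule k R) {i j : ℕ}
    (hij : i ≤ j) : W ^ i ≤ (1 ⊔ W) ^ j :=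
  (pow_le_pow_left' le_sup_right i).trans (pow_le_pow_right' le_sup_left hij)

theorem mem_of_sum_mem_of_isHomogeneous {I : Ideal (MvPolynomial σ k)}
    (hI : ∀ f ∈ I, ∀ j, homogeneousComponent j f ∈ I) {J : ℕ} {f : Fin J → MvPolynomial σ k}
    (hf : ∀ i : Fin J, (f i).IsHomogeneous i) (hsum : ∑ i, f i ∈ I) (j : Fin J) : f j ∈ I := by
  have h := hI _ hsum j
  rwa [map_sum, Fintype.sum_eq_single j fun i hij => by
    rw [homogeneousComponent_of_mem (hf i), if_neg (Fin.val_ne_iff.2 hij.symm)],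
    homogeneousComponent_of_mem (hf j), if_pos rfl] at h

theorem sum_finrank_homogeneousPiece_le [Finite σ] {I : Ideal (MvPolynomial σ k)}
    (hI : ∀ f ∈ I, ∀ j, homogeneousComponent j f ∈ I)
    {U : Submodule k (MvPolynomial σ k ⧸ I)} [Module.Finite k U] {J : ℕ}
    (hU : ∀ i < J, homogeneousPiece I i ≤ U) :
    ∑ i ∈ Finset.range J, finrank k (homogeneousPiece I i) ≤ finrank k U := by
  let Φ : (Π i : Fin J, homogeneousPiece I i) →ₗ[k] U :=
    ∑ i : Fin J, Submodule.inclusion (hU i i.2) ∘ₗ LinearMap.proj i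
  have hΦ : Function.Injective Φ := (injective_iff_map_eq_zero Φ).2 fun a ha => by
    choose f hf hfa using fun i => (a i).2
    have hsum : ∑ i, f i ∈ I := by
      rw [← Ideal.Quotient.eq_zero_iff_mem, map_sum]
      calc ∑ i, Ideal.Quotient.mk I (f i) = ∑ i, (a i : MvPolynomial σ k ⧸ I) :=
            Finset.sum_congr rfl fun i _ => hfa i
        _ = (Φ a : MvPolynomial σ k ⧸ I) := by simp [Φ]
        _ = 0 := by rw [ha, Submodule.coe_zero]
    ext i
    exact (hfa i).symm.trans
      (Ideal.Quotient.eq_zero_iff_mem.2 (mem_of_sum_mem_of_isHomogeneous hI hf hsum i))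
  simpa [Finset.sum_range, finrank_pi_fintype] using LinearMap.finrank_le_finrank_of_injective hΦ

theorem exists_sum_finrank_homogeneousPiece_le [Finite σ] {I : Ideal (MvPolynomial σ k)}
    (hI : ∀ f ∈ I, ∀ j, homogeneousComponent j f ∈ I) (hI1 : I ≠ ⊤) :
    ∃ r c s : ℕ, s ≤ Algebra.trdeg k (MvPolynomial σ k ⧸ I) ∧
      ∀ J, ∑ i ∈ Finset.range J, finrank k (homogeneousPiece I i) ≤ r * (c * J + 1) ^ s := by
  have : Nontrivial (MvPolynomial σ k ⧸ I) := Ideal.Quotient.nontrivial_iff.2 hI1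
  have hUfg : (1 ⊔ homogeneousPiece I 1).FG := by
    rw [Submodule.one_eq_span]
    exact (Submodule.fg_span_singleton 1).sup (Module.Finite.iff_fg.1 inferInstance)
  have := Module.Finite.iff_fg.2 hUfg
  obtain ⟨r, c, s, hs, hrc⟩ := exists_finrank_pow_le_of_finiteType (1 ⊔ homogeneousPiece I 1)
  refine ⟨r, c, s, hs, fun J => le_trans ?_ (hrc J)⟩
  have := Module.Finite.iff_fg.2 (hUfg.pow J)
  refine sum_finrank_homogeneousPiece_le hI fun i hi => ?_
  rw [← one_mul i, homogeneousPiece_mul]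
  exact pow_le_one_sup_pow _ hi.le

theorem exists_mul_choose_le_finrank_homogeneousPiece [IsAlgClosed k] [Finite σ]
    (P : Ideal (MvPolynomial σ k)) [P.IsPrime] {m : ℕ} (hm : 0 < m)
    (hne : homogeneousPiece P m ≠ ⊥) :
    ∃ c D, Algebra.trdeg k (MvPolynomial σ k ⧸ P) ≤ (D + 1 : ℕ) ∧ 1 ≤ c ∧
      finrank k (homogeneousPiece P m) = c + D ∧
      ∀ j, c * (D + j).choose D ≤ finrank k (homogeneousPiece P (m * (j + 1))) := by
  have hgen : Algebra.adjoin k (Set.range fun i => Ideal.Quotient.mkₐ k P (X i)) = ⊤ := by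
    rw [Set.range_comp', ← AlgHom.map_adjoin, adjoin_range_X, Algebra.map_top,
      AlgHom.range_eq_top]
    exact Ideal.Quotient.mkₐ_surjective k P
  have hpow : ∀ x ∈ Set.range fun i => Ideal.Quotient.mkₐ k P (X i),
      x ^ m ∈ homogeneousPiece P m := by
    rintro _ ⟨i, rfl⟩
    exact ⟨X i ^ m, isHomogeneous_X_pow i m, map_pow (Ideal.Quotient.mkₐ k P) _ _⟩
  obtain ⟨c, D, htrdeg, hc, hcD, hchoose⟩ :=
    exists_mul_choose_le_finrank_pow_succ_of_isDomain hgen hne hm hpow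
  refine ⟨c, D, htrdeg, hc, hcD, fun j => ?_⟩
  rw [homogeneousPiece_mul]
  exact hchoose j

end HomogeneousPiece

section PolynomialGrowth

open Polynomial Filter

theorem exists_int_eq_factorial_mul_leadingCoeff {R : Type*} [CommRing R] {f : ℕ → ℕ} {p : R[X]}
    (hf : ∀ᶠ n : ℕ in atTop, (f n : R) = p.eval (n : R)) :
    ∃ z : ℤ, (p.natDegree.factorial : R) * p.leadingCoeff = z := by
  obtain ⟨N, hN⟩ := eventually_atTop.1 hf
  have hshift : ∀ i : ℕ, p.eval ((N : R) + i • (1 : R)) = f (N + i) := fun i => by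
    simp [hN (N + i) (Nat.le_add_right N i)]
  have hdiff := congrFun (fwdDiff_iter_degree_eq_factorial (P := p)) (N : R)
  rw [fwdDiff_iter_eq_sum_shift] at hdiff
  simp only [hshift] at hdiff
  refine ⟨∑ i ∈ Finset.range (p.natDegree + 1),
    ((-1 : ℤ) ^ (p.natDegree - i) * p.natDegree.choose i) • (f (N + i) : ℤ), ?_⟩
  calc (p.natDegree.factorial : R) * p.leadingCoeff
      = (p.leadingCoeff • (p.natDegree.factorial : R → R)) N := by simp [mul_comm]
    _ = _ := by simp [← hdiff]

variable {𝕜 : Type*} [NormedField 𝕜] [LinearOrder 𝕜] [IsStrictOrderedRing 𝕜] [OrderTopology 𝕜]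
  [Archimedean 𝕜]

theorem leadingCoeff_nonneg_of_eventually_eval_nonneg_s6 {p : 𝕜[X]}
    (hp : ∀ᶠ n : ℕ in atTop, 0 ≤ p.eval (n : 𝕜)) : 0 ≤ p.leadingCoeff := by
  rcases le_or_gt p.degree 0 with hdeg | hdeg
  · rw [eq_C_of_degree_le_zero hdeg] at hp ⊢
    simpa using hp.exists
  · by_contra! hlt
    obtain ⟨n, hn, hn'⟩ := (hp.and ((p.tendsto_atBot_of_leadingCoeff_nonpos hdeg hlt.le).comp
      tendsto_natCast_atTop_atTop |>.eventually_lt_atBot 0)).exists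
    exact hn.not_gt hn'

theorem coeff_le_coeff_of_eventually_eval_le {p q : 𝕜[X]} {d : ℕ} (hp : p.natDegree ≤ d)
    (hq : q.natDegree ≤ d) (hpq : ∀ᶠ n : ℕ in atTop, p.eval (n : 𝕜) ≤ q.eval (n : 𝕜)) :
    p.coeff d ≤ q.coeff d := by
  have hlead : 0 ≤ (q - p).leadingCoeff :=
    leadingCoeff_nonneg_of_eventually_eval_nonneg_s6 <| by
      simpa only [Polynomial.eval_sub, sub_nonneg] using hpq
  rw [← sub_nonneg, ← Polynomial.coeff_sub]
  rcases (natDegree_sub_le_of_le hq hp).trans_eq (max_self d) |>.eq_or_lt with hd | hd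
  · rwa [← hd]
  · rw [coeff_eq_zero_of_natDegree_lt hd]

theorem eventually_half_leadingCoeff_mul_pow_le_eval {p : 𝕜[X]} (hp : 0 < p.leadingCoeff) :
    ∀ᶠ n : ℕ in atTop, p.leadingCoeff / 2 * (n : 𝕜) ^ p.natDegree ≤ p.eval (n : 𝕜) := by
  have hdeg : p.degree = ((Polynomial.X : 𝕜[X]) ^ p.natDegree).degree := by
    rw [degree_X_pow, degree_eq_natDegree (leadingCoeff_ne_zero.1 hp.ne')]
  have hlim := (div_tendsto_atTop_leadingCoeff_div_of_degree_eq p _ hdeg).comp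
    (tendsto_natCast_atTop_atTop (R := 𝕜))
  filter_upwards [hlim.eventually_const_lt (by simpa using hp : p.leadingCoeff / 2 < _),
    eventually_gt_atTop 0] with n hn hn0
  rw [Function.comp_apply, Polynomial.eval_pow, Polynomial.eval_X,
    lt_div_iff₀ (by positivity)] at hn
  exact hn.le

variable {f : ℕ → ℕ} {p : 𝕜[X]}

theorem leadingCoeff_nonneg_of_eventually_eq_eval
    (hf : ∀ᶠ n : ℕ in atTop, (f n : 𝕜) = p.eval (n : 𝕜)) : 0 ≤ p.leadingCoeff :=
  leadingCoeff_nonneg_of_eventually_eval_nonneg_s6 (hf.mono fun _ hn => hn ▸ Nat.cast_nonneg _)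

theorem exists_pos_mul_pow_succ_le_sum_range (hp : p ≠ 0)
    (hf : ∀ᶠ n : ℕ in atTop, (f n : 𝕜) = p.eval (n : 𝕜)) :
    ∃ ε : 𝕜, 0 < ε ∧ ∀ᶠ n : ℕ in atTop,
      ε * (n : 𝕜) ^ (p.natDegree + 1) ≤ ∑ i ∈ Finset.range (2 * n), f i := by
  have hlead : 0 < p.leadingCoeff :=
    (leadingCoeff_nonneg_of_eventually_eq_eval hf).lt_of_ne' (leadingCoeff_ne_zero.2 hp)
  refine ⟨p.leadingCoeff / 2, half_pos hlead, ?_⟩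
  obtain ⟨N, hN⟩ := eventually_atTop.1
    (hf.and (eventually_half_leadingCoeff_mul_pow_le_eval hlead))
  filter_upwards [eventually_ge_atTop N] with n hn
  have hterm : ∀ i ∈ Finset.Ico n (2 * n), p.leadingCoeff / 2 * (n : 𝕜) ^ p.natDegree ≤ f i :=
    fun i hi => by
    have hni : n ≤ i := (Finset.mem_Ico.1 hi).1
    obtain ⟨hfi, hle⟩ := hN i (hn.trans hni)
    rw [hfi]
    exact le_trans (by gcongr) hle
  calc p.leadingCoeff / 2 * (n : 𝕜) ^ (p.natDegree + 1)
      = ∑ i ∈ Finset.Ico n (2 * n), p.leadingCoeff / 2 * (n : 𝕜) ^ p.natDegree := by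
        rw [Finset.sum_const, Nat.card_Ico, two_mul, Nat.add_sub_cancel, nsmul_eq_mul]
        ring
    _ ≤ ∑ i ∈ Finset.Ico n (2 * n), (f i : 𝕜) := Finset.sum_le_sum hterm
    _ ≤ ∑ i ∈ Finset.range (2 * n), (f i : 𝕜) :=
        Finset.sum_le_sum_of_subset_of_nonneg
          (fun i hi => Finset.mem_range.2 (Finset.mem_Ico.1 hi).2) fun _ _ _ => Nat.cast_nonneg _
    _ = _ := (Nat.cast_sum _ _).symm

theorem natDegree_lt_of_sum_range_le (hp : p ≠ 0)
    (hf : ∀ᶠ n : ℕ in atTop, (f n : 𝕜) = p.eval (n : 𝕜)) {r c s : ℕ}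
    (hsum : ∀ n, ∑ i ∈ Finset.range n, f i ≤ r * (c * n + 1) ^ s) : p.natDegree < s := by
  by_contra! hs
  obtain ⟨ε, hε, hle⟩ := exists_pos_mul_pow_succ_le_sum_range hp hf
  let q : 𝕜[X] :=
    Polynomial.C (r : 𝕜) * (Polynomial.C (c * 2 : 𝕜) * Polynomial.X + Polynomial.C 1) ^ s
  have hq : q.natDegree ≤ p.natDegree :=
    (natDegree_C_mul_le _ _).trans
      ((natDegree_pow_le_of_le s natDegree_linear_le).trans (by rwa [mul_one]))
  have hcoeff := coeff_le_coeff_of_eventually_eval_le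
    (p := Polynomial.C ε * Polynomial.X ^ (p.natDegree + 1)) (q := q)
    (natDegree_C_mul_X_pow_le _ _) (hq.trans (Nat.le_succ _)) <| hle.mono fun n hn => by
      have hbound : ((∑ i ∈ Finset.range (2 * n), f i : ℕ) : 𝕜) ≤ r * (c * (2 * n) + 1) ^ s := by
        exact_mod_cast hsum (2 * n)
      simpa [q, mul_assoc] using hn.trans hbound
  rw [coeff_C_mul_X_pow, if_pos rfl, coeff_eq_zero_of_natDegree_lt (Nat.lt_succ_of_le hq)] at hcoeff
  exact hcoeff.not_gt hε

theorem floor_factorial_mul_leadingCoeff [FloorSemiring 𝕜]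
    (hf : ∀ᶠ n : ℕ in atTop, (f n : 𝕜) = p.eval (n : 𝕜)) :
    (⌊(p.natDegree.factorial : 𝕜) * p.leadingCoeff⌋₊ : 𝕜) =
      p.natDegree.factorial * p.leadingCoeff := by
  obtain ⟨z, hz⟩ := exists_int_eq_factorial_mul_leadingCoeff hf
  have hz0 : (0 : 𝕜) ≤ z := hz ▸ mul_nonneg (Nat.cast_nonneg _)
    (leadingCoeff_nonneg_of_eventually_eq_eval hf)
  lift z to ℕ using Int.cast_nonneg_iff.1 hz0
  rw [hz, Int.cast_natCast, Nat.floor_natCast]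

theorem mul_pow_succ_le_factorial_mul {c D m : ℕ}
    (hchoose : ∀ j, c * (D + j).choose D ≤ f (m * (j + 1))) (j : ℕ) :
    c * (j + 1) ^ D ≤ D.factorial * f (m * (j + 1)) :=
  calc c * (j + 1) ^ D ≤ c * (D.factorial * (D + j).choose D) := by
        rw [add_comm D j, ← Nat.ascFactorial_eq_factorial_mul_choose]
        gcongr
        exact Nat.pow_succ_le_ascFactorial (j + 1) D
    _ = D.factorial * (c * (D + j).choose D) := by ring
    _ ≤ D.factorial * f (m * (j + 1)) := by gcongr; exact hchoose j

theorem le_factorial_mul_coeff_mul_pow (hf : ∀ᶠ n : ℕ in atTop, (f n : 𝕜) = p.eval (n : 𝕜))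
    {c D m : ℕ} (hm : 0 < m) (hD : p.natDegree ≤ D)
    (hchoose : ∀ j, c * (D + j).choose D ≤ f (m * (j + 1))) :
    (c : 𝕜) ≤ D.factorial * p.coeff D * m ^ D := by
  let q : 𝕜[X] := Polynomial.C (D.factorial : 𝕜) * p.comp (Polynomial.C (m : 𝕜) * Polynomial.X)
  have hq : q.natDegree ≤ D :=
    calc q.natDegree ≤ (p.comp (Polynomial.C (m : 𝕜) * Polynomial.X)).natDegree :=
          natDegree_C_mul_le _ _
      _ ≤ D * 1 := natDegree_comp_le.trans
          (Nat.mul_le_mul hD ((natDegree_C_mul_le _ _).trans natDegree_X_le))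
      _ = D := mul_one D
  have htendsto : Tendsto (fun n : ℕ => m * n) atTop atTop := tendsto_id.const_mul_atTop' hm
  have hcoeff := coeff_le_coeff_of_eventually_eval_le
    (p := Polynomial.C (c : 𝕜) * Polynomial.X ^ D) (q := q)
    (natDegree_C_mul_X_pow_le _ _) hq <| by
      filter_upwards [htendsto.eventually hf, eventually_gt_atTop 0] with n hfn hn
      obtain ⟨j, rfl⟩ := Nat.exists_eq_add_one_of_ne_zero hn.ne'
      have hle : ((c * (j + 1) ^ D : ℕ) : 𝕜) ≤ (D.factorial * f (m * (j + 1)) : ℕ) :=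
        Nat.cast_le.2 (mul_pow_succ_le_factorial_mul hchoose j)
      push_cast [hfn] at hle
      simpa [q] using hle
  rwa [coeff_C_mul_X_pow, if_pos rfl, Polynomial.coeff_C_mul, comp_C_mul_X_coeff,
    ← mul_assoc] at hcoeff

theorem eq_natDegree_and_le_floor_mul_pow [FloorSemiring 𝕜]
    (hf : ∀ᶠ n : ℕ in atTop, (f n : 𝕜) = p.eval (n : 𝕜)) {c D m : ℕ} (hm : 0 < m) (hc : 0 < c)
    (hD : p.natDegree ≤ D) (hchoose : ∀ j, c * (D + j).choose D ≤ f (m * (j + 1))) :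
    D = p.natDegree ∧
      c ≤ ⌊(p.natDegree.factorial : 𝕜) * p.leadingCoeff⌋₊ * m ^ p.natDegree := by
  have hle := le_factorial_mul_coeff_mul_pow hf hm hD hchoose
  obtain rfl | hlt := hD.eq_or_lt
  · refine ⟨rfl, Nat.cast_le (α := 𝕜).1 ?_⟩
    rwa [Nat.cast_mul, Nat.cast_pow, floor_factorial_mul_leadingCoeff hf]
  · rw [coeff_eq_zero_of_natDegree_lt hlt, mul_zero, zero_mul] at hle
    exact absurd (Nat.cast_pos.2 hc) hle.not_gt

end PolynomialGrowth

theorem eventually_hilbF_eq_eval_hilbP_s6 {k : Type*} [Field k] {n : ℕ}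
    {I : Ideal (MvPolynomial (Fin (n + 1)) k)} (hI : hilbP k I ≠ 0) :
    ∀ᶠ m : ℕ in Filter.atTop, (hilbF k I m : ℚ) = (hilbP k I).eval (m : ℚ) := by
  unfold hilbP at hI ⊢
  split_ifs at hI ⊢ with h
  · exact h.choose_spec
  · exact absurd rfl hI

/-- upper bound `h_V(m) ≤ deg V · m^d + d` for the Hilbert function
of an irreducible projective variety of dimension `d` (equivalently, of a
relevant homogeneous prime ideal `P` of projective dimension `d`). -/
theorem hilbert_function_irreducible_upper_bound {k : Type*} [Field k] [IsAlgClosed k]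
    {n d : ℕ} (P : Ideal (MvPolynomial (Fin (n+1)) k)) (hprime : P.IsPrime)
    (hhom : IsHomogeneousIdeal P) (hne : hilbP k P ≠ 0) (hdim : idealDim k P = d) :
    ∀ m : ℕ, 1 ≤ m → hilbF k P m ≤ idealDeg k P * m ^ d + d := by
  intro m hm
  by_cases hbot : homogeneousPiece P m = ⊥
  · have hzero : hilbF k P m = 0 :=
      (congrArg (fun A : Submodule k _ => Module.finrank k A) hbot).trans (finrank_bot k _)
    exact hzero ▸ Nat.zero_le _
  obtain ⟨c, D, htrdeg, hc, hcD, hchoose⟩ :=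
    exists_mul_choose_le_finrank_homogeneousPiece P hm hbot
  obtain ⟨r, b, s, hs, hsum⟩ := exists_sum_finrank_homogeneousPiece_le hhom hprime.ne_top
  have heval := eventually_hilbF_eq_eval_hilbP_s6 hne
  have hsD : s ≤ D + 1 := by exact_mod_cast hs.trans htrdeg
  have hdD : (hilbP k P).natDegree ≤ D :=
    Nat.le_of_lt_succ ((natDegree_lt_of_sum_range_le hne heval hsum).trans_le hsD)
  obtain ⟨hD, hle⟩ := eq_natDegree_and_le_floor_mul_pow heval hm hc hdD hchoose
  calc hilbF k P m = c + D := hcD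
    _ ≤ idealDeg k P * m ^ d + d := by
      rw [← hdim, hD]
      exact Nat.add_le_add_right hle _
end
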